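/- For every ω > 0 and every n ∈ ℕ there exist positive constants B_n and C_n such that for all B > B_n, all m ∈ ℤ, and every eigenfunction ψ of Q_m(B) with eigenvalue λ ≤ Θ₀ + ω·B^{−1/3}: ∫_{ℝ²₊} |ρ|ⁿ·(|ψ|² + |∂_τψ|² + B^{−1/3}·|∂_ρψ|²) dτ dρ ≤ C_n·‖ψ‖². -/

import Mathlib

noncomputable section
open MeasureTheory Real Filter Set Topology

/-- The de Gennes energy `λ₁^𝒢(ξ)`. -/
def deGennes (ξ : ℝ) : ℝ :=
  sInf { q : ℝ | ∃ u : ℝ → ℂ, ContDiff ℝ 1 u ∧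
    IntegrableOn (fun t => ‖u t‖ ^ 2) (Ioi 0) ∧
    IntegrableOn (fun t => ‖deriv u t‖ ^ 2 + (t + ξ) ^ 2 * ‖u t‖ ^ 2) (Ioi 0) ∧
    0 < (∫ t in Ioi (0:ℝ), ‖u t‖ ^ 2) ∧
    q = (∫ t in Ioi (0:ℝ), (‖deriv u t‖ ^ 2 + (t + ξ) ^ 2 * ‖u t‖ ^ 2)) /
        ∫ t in Ioi (0:ℝ), ‖u t‖ ^ 2 }

/-- `Θ₀`, the infimum of the de Gennes energy. -/
def Theta0 : ℝ := ⨅ ξ : ℝ, deGennes ξ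

/-- The half plane `ℝ²₊ = {(τ, ρ) : τ > 0}`. -/
def halfPlane : Set (ℝ × ℝ) := Ioi (0:ℝ) ×ˢ (univ : Set ℝ)

/-- The potential of the effective operator `Q_m(B)`. -/
def qPot (B : ℝ) (m : ℤ) (p : ℝ × ℝ) : ℝ :=
  (p.1 + ((m : ℝ) - B / 2) / Real.sqrt B + B ^ (-(1:ℝ)/6) * p.2 ^ 2 / 2) ^ 2

/-- The integrand of the quadratic form `q_m`. -/
def qIntegrand (B : ℝ) (m : ℤ) (ψ : ℝ × ℝ → ℂ) (p : ℝ × ℝ) : ℝ :=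
  ‖fderiv ℝ ψ p (1, 0)‖ ^ 2 + qPot B m p * ‖ψ p‖ ^ 2
    + B ^ (-(1:ℝ)/3) * ‖fderiv ℝ ψ p (0, 1)‖ ^ 2

/-- The quadratic form `q_m[ψ]`. -/
def qForm (B : ℝ) (m : ℤ) (ψ : ℝ × ℝ → ℂ) : ℝ :=
  ∫ p in halfPlane, qIntegrand B m ψ p

/-- Membership in the form domain of `q_m`. -/
def InFormDomain (B : ℝ) (m : ℤ) (ψ : ℝ × ℝ → ℂ) : Prop :=
  ContDiff ℝ 1 ψ ∧ IntegrableOn (fun p => ‖ψ p‖ ^ 2) halfPlane ∧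
    IntegrableOn (qIntegrand B m ψ) halfPlane

/-- The rescaled momentum `δ̃₁ = ((m - B/2)/√B - ξ₀)·B^{1/6}`. -/
def delta1 (B : ℝ) (m : ℤ) (ξ₀ : ℝ) : ℝ :=
  (((m : ℝ) - B / 2) / Real.sqrt B - ξ₀) * B ^ ((1:ℝ)/6)

/-- Second derivative in the `τ` direction. -/
def d2τ (ψ : ℝ × ℝ → ℂ) (p : ℝ × ℝ) : ℂ :=
  fderiv ℝ (fun q => fderiv ℝ ψ q ((1:ℝ), (0:ℝ))) p (1, 0)

/-- Second derivative in the `ρ` direction. -/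
def d2ρ (ψ : ℝ × ℝ → ℂ) (p : ℝ × ℝ) : ℂ :=
  fderiv ℝ (fun q => fderiv ℝ ψ q ((0:ℝ), (1:ℝ))) p (0, 1)

/-- An eigenfunction of the model operator `Q_m(B)` on the half plane, with Neumann
boundary condition at `τ = 0`, eigenvalue `lam`, which is nonzero, smooth up to the
boundary, and lies in `L²` together with its first derivatives. -/
def IsQEigenfunction (B : ℝ) (m : ℤ) (lam : ℝ) (ψ : ℝ × ℝ → ℂ) : Prop :=
  ContDiff ℝ (⊤ : ℕ∞) ψ ∧
  IntegrableOn (fun p => ‖ψ p‖ ^ 2) halfPlane ∧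
  IntegrableOn (fun p => ‖fderiv ℝ ψ p ((1:ℝ), (0:ℝ))‖ ^ 2) halfPlane ∧
  IntegrableOn (fun p => ‖fderiv ℝ ψ p ((0:ℝ), (1:ℝ))‖ ^ 2) halfPlane ∧
  0 < (∫ p in halfPlane, ‖ψ p‖ ^ 2) ∧
  (∀ p ∈ halfPlane,
    -d2τ ψ p - ((B ^ (-(1:ℝ)/3) : ℝ) : ℂ) * d2ρ ψ p + ((qPot B m p : ℝ) : ℂ) * ψ p
      = (lam : ℂ) * ψ p) ∧
  (∀ ρ : ℝ, fderiv ℝ ψ ((0:ℝ), ρ) ((1:ℝ), (0:ℝ)) = 0)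


def pcJ (β x : ℝ) : ℝ := ∫ s in Ioi (0:ℝ), s ^ β * Real.exp (-s ^ 2 / 4 - x * s)

lemma pcJ_int {β : ℝ} (hβ : -1 < β) (x : ℝ) :
    IntegrableOn (fun s : ℝ => s ^ β * Real.exp (-s ^ 2 / 4 - x * s)) (Ioi 0) := by
  have h := (integrableOn_rpow_mul_exp_neg_mul_sq (b := 1/8) (by norm_num) hβ).const_mul
    (Real.exp (2 * x ^ 2))
  refine Integrable.mono' h ?_ ?_
  · refine ContinuousOn.aestronglyMeasurable ?_ measurableSet_Ioi
    refine ContinuousOn.mul ?_ (by fun_prop)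
    intro s hs
    exact (Real.continuousAt_rpow_const s β (Or.inl (ne_of_gt hs))).continuousWithinAt
  · refine (ae_restrict_mem measurableSet_Ioi).mono fun s hs => ?_
    have hs : 0 < s := hs
    have h0 : 0 ≤ s ^ β := (Real.rpow_pos_of_pos hs β).le
    rw [Real.norm_of_nonneg (mul_nonneg h0 (Real.exp_pos _).le), mul_left_comm, ← Real.exp_add]
    refine mul_le_mul_of_nonneg_left (Real.exp_le_exp.2 ?_) h0
    nlinarith [sq_nonneg (s + 4 * x)]

lemma pcJ_pos {β : ℝ} (hβ : -1 < β) (x : ℝ) : 0 < pcJ β x := by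
  unfold pcJ
  rw [setIntegral_pos_iff_support_of_nonneg_ae _ (pcJ_int hβ x)]
  · have : Ioi (0:ℝ) ⊆ (Function.support fun s : ℝ => s ^ β * Real.exp (-s ^ 2 / 4 - x * s)) := by
      intro s hs
      have hs : 0 < s := hs
      exact (mul_pos (Real.rpow_pos_of_pos hs β) (Real.exp_pos _)).ne'
    rw [inter_eq_self_of_subset_right this]
    simp
  · refine (ae_restrict_mem measurableSet_Ioi).mono fun s hs => ?_
    have hs : 0 < s := hs
    exact (mul_pos (Real.rpow_pos_of_pos hs β) (Real.exp_pos _)).le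

lemma pcJ_anti {β : ℝ} (hβ : -1 < β) : Antitone (pcJ β) := by
  intro x x' hx
  refine setIntegral_mono_on (pcJ_int hβ x') (pcJ_int hβ x) measurableSet_Ioi ?_
  intro s hs
  have hs : 0 < s := hs
  have h0 : 0 ≤ s ^ β := (Real.rpow_pos_of_pos hs β).le
  refine mul_le_mul_of_nonneg_left (Real.exp_le_exp.2 ?_) h0
  nlinarith

lemma pcJ_hasDerivAt {β : ℝ} (hβ : -1 < β) (x : ℝ) :
    HasDerivAt (pcJ β) (-pcJ (β + 1) x) x := by
  have key := hasDerivAt_integral_of_dominated_loc_of_deriv_le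
    (μ := volume.restrict (Ioi (0:ℝ))) (s := Metric.ball x 1)
    (F := fun x s : ℝ => s ^ β * Real.exp (-s ^ 2 / 4 - x * s))
    (F' := fun x s : ℝ => -(s ^ (β + 1) * Real.exp (-s ^ 2 / 4 - x * s)))
    (x₀ := x) (bound := fun s => s ^ (β + 1) * Real.exp (-s ^ 2 / 4 - (x - 1) * s))
    (Metric.ball_mem_nhds x one_pos)
    (Eventually.of_forall fun z => (pcJ_int hβ z).aestronglyMeasurable)
    (pcJ_int hβ x) (pcJ_int (β := β + 1) (by linarith) x).aestronglyMeasurable.neg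
    ?_ (pcJ_int (β := β + 1) (by linarith) (x - 1)) ?_
  · have := key.2
    rw [integral_neg] at this
    exact this
  · refine (ae_restrict_mem measurableSet_Ioi).mono fun s hs z hz => ?_
    have hs : 0 < s := hs
    have h0 : 0 ≤ s ^ (β+1) := (Real.rpow_pos_of_pos hs _).le
    rw [norm_neg, Real.norm_of_nonneg (mul_nonneg h0 (Real.exp_pos _).le)]
    refine mul_le_mul_of_nonneg_left (Real.exp_le_exp.2 ?_) h0
    rw [Metric.mem_ball, Real.dist_eq, abs_lt] at hz
    nlinarith
  · refine (ae_restrict_mem measurableSet_Ioi).mono fun s hs z hz => ?_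
    have hs : 0 < s := hs
    have h1 : HasDerivAt (fun z : ℝ => -s ^ 2 / 4 - z * s) (-s) z := by
      simpa using ((hasDerivAt_id z).mul_const s).const_sub (-s ^ 2 / 4)
    have := (h1.exp).const_mul (s ^ β)
    refine this.congr_deriv ?_
    rw [Real.rpow_add_one hs.ne']
    ring

lemma pcJ_rel {α : ℝ} (hα : 0 < α) (x : ℝ) :
    α * pcJ (α - 1) x = pcJ (α + 1) x / 2 + x * pcJ α x := by
  have i1 := (pcJ_int (β := α - 1) (by linarith) x)
  have i2 := (pcJ_int (β := α) (by linarith) x)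
  have i3 := (pcJ_int (β := α + 1) (by linarith) x)
  set f : ℝ → ℝ := fun s => s ^ α * Real.exp (-s ^ 2 / 4 - x * s)
  set f' : ℝ → ℝ := fun s => α * (s ^ (α - 1) * Real.exp (-s ^ 2 / 4 - x * s)) -
    ((s ^ (α + 1) * Real.exp (-s ^ 2 / 4 - x * s)) / 2 + x * (s ^ α * Real.exp (-s ^ 2 / 4 - x * s)))
  have hd : ∀ s ∈ Ioi (0:ℝ), HasDerivAt f (f' s) s := by
    intro s hs
    have hs : 0 < s := hs
    have h1 : HasDerivAt (fun s : ℝ => -s ^ 2 / 4 - x * s) (-s/2 - x) s := by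
      have := (((hasDerivAt_id s).pow 2).neg.div_const 4).sub ((hasDerivAt_id s).const_mul x)
      refine this.congr_deriv ?_
      simp; ring
    refine ((Real.hasDerivAt_rpow_const (p := α) (Or.inl hs.ne')).mul h1.exp).congr_deriv ?_
    simp only [f']
    rw [Real.rpow_add_one hs.ne']
    ring
  have hi : IntegrableOn f' (Ioi 0) := (i1.const_mul α).sub ((i3.div_const 2).add (i2.const_mul x))
  have ht := tendsto_zero_of_hasDerivAt_of_integrableOn_Ioi hd hi i2
  have hc : ContinuousWithinAt f (Ici 0) 0 := by
    refine Continuous.continuousWithinAt ?_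
    exact (Real.continuous_rpow_const hα.le).mul (by fun_prop)
  have h := integral_Ioi_of_hasDerivAt_of_tendsto hc hd hi ht
  have h0 : f 0 = 0 := by simp [f, Real.zero_rpow hα.ne']
  rw [h0, sub_zero] at h
  have h2 : ∫ s in Ioi (0:ℝ), f' s = α * pcJ (α - 1) x - (pcJ (α + 1) x / 2 + x * pcJ α x) := by
    simp only [f', pcJ]
    have i4 : IntegrableOn (fun s : ℝ => (s ^ (α + 1) * Real.exp (-s ^ 2 / 4 - x * s)) / 2
      + x * (s ^ α * Real.exp (-s ^ 2 / 4 - x * s))) (Ioi 0) :=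
      (i3.div_const 2).add (i2.const_mul x)
    rw [integral_sub (i1.const_mul α) i4,
      integral_add (i3.div_const 2) (i2.const_mul x), integral_const_mul, integral_const_mul,
      integral_div]
  linarith

lemma pcJ_rel0 (x : ℝ) : pcJ 1 x / 2 + x * pcJ 0 x = 1 := by
  have i2 := (pcJ_int (β := 0) (by linarith) x)
  have i3 := (pcJ_int (β := 1) (by linarith) x)
  set f : ℝ → ℝ := fun s => s ^ (0:ℝ) * Real.exp (-s ^ 2 / 4 - x * s)
  set f' : ℝ → ℝ := fun s => -
    ((s ^ (1:ℝ) * Real.exp (-s ^ 2 / 4 - x * s)) / 2 + x * (s ^ (0:ℝ) * Real.exp (-s ^ 2 / 4 - x * s)))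
  have hd : ∀ s, HasDerivAt f (f' s) s := by
    intro s
    have h1 : HasDerivAt (fun s : ℝ => -s ^ 2 / 4 - x * s) (-s/2 - x) s := by
      have := (((hasDerivAt_id s).pow 2).neg.div_const 4).sub ((hasDerivAt_id s).const_mul x)
      refine this.congr_deriv ?_
      simp; ring
    have := h1.exp
    simp only [f, f', Real.rpow_zero, Real.rpow_one, one_mul]
    refine this.congr_deriv ?_
    ring
  have hi : IntegrableOn f' (Ioi 0) := ((i3.div_const 2).add (i2.const_mul x)).neg
  have ht := tendsto_zero_of_hasDerivAt_of_integrableOn_Ioi (fun s _ => hd s) hi i2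
  have h := integral_Ioi_of_hasDerivAt_of_tendsto' (fun s _ => hd s) hi ht
  have h0 : f 0 = 1 := by simp [f]
  rw [h0] at h
  have h2 : ∫ s in Ioi (0:ℝ), f' s = - (pcJ 1 x / 2 + x * pcJ 0 x) := by
    simp only [f', pcJ]
    rw [integral_neg, integral_add (i3.div_const 2) (i2.const_mul x), integral_const_mul,
      integral_div]
  linarith

lemma pcJ_cont (j : ℝ) (hj : 0 ≤ j) (hj1 : j ≤ 1) :
    ContinuousOn (fun y : ℝ => pcJ ((1 - y ^ 2) / 2 + j) (-y)) (Icc 0 1) := by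
  unfold pcJ
  refine continuousOn_of_dominated (bound := fun s => (s ^ (0:ℝ) * Real.exp (-s ^ 2 / 4 - (-1) * s))
     + (s ^ (2:ℝ) * Real.exp (-s ^ 2 / 4 - (-1) * s))) ?_ ?_ ?_ ?_
  · intro y hy
    exact (pcJ_int (by nlinarith [hy.1, hy.2]) _).aestronglyMeasurable
  · intro y hy
    refine (ae_restrict_mem measurableSet_Ioi).mono fun s hs => ?_
    have hs : 0 < s := hs
    have h0 : 0 ≤ s ^ ((1 - y ^ 2) / 2 + j) := (Real.rpow_pos_of_pos hs _).le
    rw [Real.norm_of_nonneg (mul_nonneg h0 (Real.exp_pos _).le), ← add_mul]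
    refine mul_le_mul ?_ (Real.exp_le_exp.2 ?_) (Real.exp_pos _).le ?_
    · rcases le_total s 1 with h | h
      · have : s ^ ((1 - y ^ 2) / 2 + j) ≤ 1 := Real.rpow_le_one hs.le h (by nlinarith [hy.1, hy.2])
        have := Real.rpow_nonneg hs.le 2
        simp only [Real.rpow_zero]
        linarith
      · have : s ^ ((1 - y ^ 2) / 2 + j) ≤ s ^ (2:ℝ) :=
          Real.rpow_le_rpow_of_exponent_le h (by nlinarith [hy.1, hy.2])
        simp only [Real.rpow_zero]
        linarith
    · nlinarith [hy.1, hy.2]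
    · positivity
  · exact (pcJ_int (by norm_num) _).add (pcJ_int (by norm_num) _)
  · refine (ae_restrict_mem measurableSet_Ioi).mono fun s hs => ?_
    have hs : 0 < s := hs
    refine Continuous.continuousOn ?_
    refine Continuous.mul ?_ (by fun_prop)
    exact Continuous.rpow (by fun_prop) (by fun_prop) (fun _ => Or.inl hs.ne')

lemma pc_exists_y : ∃ y : ℝ, 0 < y ∧ y < 1 ∧
    pcJ ((1 - y ^ 2) / 2) (-y) = y * pcJ ((1 - y ^ 2) / 2 - 1) (-y) := by
  set H : ℝ → ℝ := fun y => y * pcJ ((1 - y ^ 2) / 2 + 1) (-y) / 2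
    - (y ^ 2 + (1 - y ^ 2) / 2) * pcJ ((1 - y ^ 2) / 2 + 0) (-y) with hH
  have hc : ContinuousOn H (Icc 0 1) := by
    have h1 := pcJ_cont 1 (by norm_num) le_rfl
    have h0 := pcJ_cont 0 le_rfl (by norm_num)
    exact ((continuousOn_id.mul h1).div_const 2).sub (ContinuousOn.mul (by fun_prop) h0)
  have hH0 : H 0 < 0 := by
    simp only [hH]
    have := pcJ_pos (β := (1 - 0 ^ 2) / 2 + 0) (by norm_num) (-0)
    nlinarith
  have hH1 : 0 < H 1 := by
    simp only [hH]
    have := pcJ_rel0 (-1)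
    norm_num
    linarith
  obtain ⟨y, hy, hy0⟩ := intermediate_value_Icc zero_le_one hc ⟨hH0.le, hH1.le⟩
  have y0 : 0 < y := by
    rcases hy.1.eq_or_lt with h | h
    · rw [← h] at hy0; linarith
    · exact h
  have y1 : y < 1 := by
    rcases hy.2.eq_or_lt with h | h
    · rw [h] at hy0; linarith
    · exact h
  have ha : 0 < (1 - y ^ 2) / 2 := by nlinarith
  refine ⟨y, y0, y1, ?_⟩
  have hr := pcJ_rel ha (-y)
  simp only [hH, add_zero] at hy0
  have : (1 - y ^ 2) / 2 * (pcJ ((1 - y ^ 2) / 2) (-y) - y * pcJ ((1 - y ^ 2) / 2 - 1) (-y)) = 0 := by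
    linear_combination (-y) * hr - hy0
  rcases mul_eq_zero.1 this with h | h
  · exact absurd h ha.ne'
  · linarith


lemma pc_v : ∃ (y : ℝ) (v v1 : ℝ → ℝ), 0 < y ∧ y < 1 ∧ (∀ x, 0 < v x) ∧
    (∀ x, HasDerivAt v (v1 x) x) ∧ (∀ x, HasDerivAt v1 ((x ^ 2 - y ^ 2) * v x) x) ∧
    v1 (-y) = 0 ∧ (∀ x, v1 x < -x * v x) ∧
    ∃ C, 0 ≤ C ∧ ∀ x, -y ≤ x → v x ≤ C * Real.exp (-x ^ 2 / 2) ∧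
      |v1 x| ≤ C * (1 + |x|) * Real.exp (-x ^ 2 / 2) := by
  obtain ⟨y, y0, y1, hy⟩ := pc_exists_y
  set α := (1 - y ^ 2) / 2 with hα
  have ha : 0 < α := by simp only [hα]; nlinarith
  have p0 := fun x => pcJ_pos (β := α - 1) (by linarith) x
  have p1 := fun x => pcJ_pos (β := α) (by linarith) x
  have d0 : ∀ x, HasDerivAt (pcJ (α - 1)) (-pcJ α x) x := fun x => by
    simpa using pcJ_hasDerivAt (β := α - 1) (by linarith) x
  have d1 := fun x => pcJ_hasDerivAt (β := α) (by linarith) x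
  have de : ∀ x : ℝ, HasDerivAt (fun x : ℝ => Real.exp (-x ^ 2 / 2))
      (Real.exp (-x ^ 2 / 2) * (-x)) x := fun x => by
    have h1 : HasDerivAt (fun s : ℝ => -s ^ 2 / 2) (-x) x := by
      have := (((hasDerivAt_id x).pow 2).neg.div_const 2)
      refine this.congr_deriv ?_
      simp; ring
    exact h1.exp
  refine ⟨y, fun x => Real.exp (-x ^ 2 / 2) * pcJ (α - 1) x,
    fun x => -(Real.exp (-x ^ 2 / 2) * (x * pcJ (α - 1) x + pcJ α x)), y0, y1, ?_, ?_, ?_, ?_, ?_, ?_⟩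
  · intro x; have := p0 x; positivity
  · intro x
    refine ((de x).mul (d0 x)).congr_deriv ?_
    ring
  · intro x
    refine ((de x).mul (((hasDerivAt_id x).mul (d0 x)).add (d1 x))).neg.congr_deriv ?_
    have := pcJ_rel ha x
    have hyy : y ^ 2 = 1 - 2 * α := by simp only [hα]; ring
    rw [hyy]
    simp only [id, Pi.mul_apply, Pi.add_apply]
    linear_combination (-2 * Real.exp (-x ^ 2 / 2)) * this
  · simp only [hy]; ring
  · intro x
    have := p1 x
    have h := Real.exp_pos (-x ^ 2 / 2)
    nlinarith [mul_pos h this]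
  · refine ⟨pcJ (α - 1) (-y) + pcJ α (-y), by have := p0 (-y); have := p1 (-y); linarith, ?_⟩
    intro x hx
    have h := Real.exp_pos (-x ^ 2 / 2)
    have m0 := pcJ_anti (β := α - 1) (by linarith) hx
    have m1 := pcJ_anti (β := α) (by linarith) hx
    have q0 := p0 x
    have q1 := p1 x
    constructor
    · beta_reduce
      rw [mul_comm (Real.exp _) (pcJ (α - 1) x)]
      refine mul_le_mul_of_nonneg_right ?_ h.le
      have := p1 (-y)
      linarith
    · rw [abs_neg, abs_mul, abs_of_pos h, mul_comm]
      refine mul_le_mul_of_nonneg_right ?_ h.le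
      refine (abs_add_le _ _).trans ?_
      rw [abs_mul, abs_of_pos q0, abs_of_pos q1]
      have := abs_nonneg x
      nlinarith [p0 (-y), p1 (-y)]

/-- lower bound on the logarithmic derivative, left part -/
lemma pc_left {y : ℝ} {v v1 : ℝ → ℝ} (y0 : 0 < y) (y1 : y < 1) (vpos : ∀ x, 0 < v x)
    (dv : ∀ x, HasDerivAt v (v1 x) x) (dv1 : ∀ x, HasDerivAt v1 ((x ^ 2 - y ^ 2) * v x) x)
    (h0 : v1 (-y) = 0) (x δ : ℝ) (hδ : 0 ≤ δ) (hδ1 : δ ≤ 1) (hx : x + δ ≤ -y) :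
    y * δ ^ 2 / 2 * v x ≤ - v1 x := by
  have cv : Continuous v := continuous_iff_continuousAt.2 fun x => (dv x).continuousAt
  have cv1 : Continuous v1 := continuous_iff_continuousAt.2 fun x => (dv1 x).continuousAt
  have mono1 : MonotoneOn v1 (Iic (-y)) := by
    refine monotoneOn_of_hasDerivWithinAt_nonneg (convex_Iic _) cv1.continuousOn
      (fun s _ => (dv1 s).hasDerivWithinAt) ?_
    intro s hs
    rw [interior_Iic] at hs
    have hs : s < -y := hs
    have := vpos s
    have : 0 ≤ s ^ 2 - y ^ 2 := by nlinarith
    positivity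
  have neg1 : ∀ s, s ≤ -y → v1 s ≤ 0 := fun s hs => by
    rw [← h0]; exact mono1 hs (mem_Iic.2 le_rfl) hs
  have anti : AntitoneOn v (Iic (-y)) := by
    refine antitoneOn_of_hasDerivWithinAt_nonpos (convex_Iic _) cv.continuousOn
      (fun s _ => (dv s).hasDerivWithinAt) ?_
    intro s hs
    rw [interior_Iic] at hs
    exact neg1 s (le_of_lt hs)
  set z := x + δ with hz
  have hxz : x ≤ z := by linarith
  have mono2 : MonotoneOn (fun s => v1 s + y * v z * (s + y) ^ 2) (Icc x z) := by
    refine monotoneOn_of_hasDerivWithinAt_nonneg (f' := fun s => (s ^ 2 - y ^ 2) * v s +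
      y * v z * (2 * (s + y))) (convex_Icc _ _) (by fun_prop) ?_ ?_
    · intro s _
      refine HasDerivAt.hasDerivWithinAt ?_
      refine ((dv1 s).add ((((hasDerivAt_id s).add_const y).pow 2).const_mul (y * v z))).congr_deriv ?_
      simp
    · intro s hs
      rw [interior_Icc] at hs
      have hsz : s ≤ -y := hs.2.le.trans hx
      have hv : v z ≤ v s := anti hsz hx hs.2.le
      have hvz := vpos z
      have h1 : 0 ≤ -s - y := by linarith
      have h2 : (s ^ 2 - y ^ 2) * v s = (-s - y) * ((-s + y) * v s) := by ring
      have h3 : 2 * y * v z ≤ (-s + y) * v s := by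
        refine mul_le_mul (by linarith) hv hvz.le (by linarith)
      rw [h2]
      nlinarith [mul_le_mul_of_nonneg_left h3 h1]
  have h1 := mono2 (left_mem_Icc.2 hxz) (right_mem_Icc.2 hxz) hxz
  simp only at h1
  have h2 : y * v z * δ ^ 2 ≤ - v1 x := by
    have := neg1 z hx
    have hvz := mul_pos y0 (vpos z)
    have : (z + y) ^ 2 + δ ^ 2 ≤ (x + y) ^ 2 := by
      rw [hz] at hx ⊢
      nlinarith
    nlinarith
  have h3 : v x - v z ≤ δ * (- v1 x) := by
    rcases hδ.eq_or_lt with h | h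
    · have : z = x := by rw [hz, ← h, add_zero]
      rw [this, ← h]; simp
    · obtain ⟨c, hc, hc'⟩ := exists_hasDerivAt_eq_slope v v1 (show x < z by linarith) cv.continuousOn
        (fun s _ => dv s)
      have : v1 x ≤ v1 c := mono1 (by simpa using hxz.trans hx) (by simpa using hc.2.le.trans hx) hc.1.le
      have hzx : z - x = δ := by rw [hz]; ring
      rw [hzx] at hc'
      rw [hc', le_div_iff₀ h] at this
      linarith
  have n1 := neg1 x (hxz.trans hx)
  have h4 : y * δ ^ 2 * v x ≤ - v1 x * (1 + y * δ ^ 3) := by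
    have : 0 ≤ y * δ ^ 2 := by positivity
    nlinarith [mul_le_mul_of_nonneg_left h3 this]
  have h5 : y * δ ^ 3 ≤ 1 := by
    have : δ ^ 3 ≤ 1 := pow_le_one₀ hδ hδ1
    have : 0 ≤ δ ^ 3 := by positivity
    nlinarith
  nlinarith

lemma pc_p : ∃ (y c : ℝ) (v v1 : ℝ → ℝ), 0 < y ∧ y < 1 ∧ 0 < c ∧ (∀ x, 0 < v x) ∧
    (∀ x, HasDerivAt v (v1 x) x) ∧ (∀ x, HasDerivAt v1 ((x ^ 2 - y ^ 2) * v x) x) ∧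
    v1 (-y) = 0 ∧ (∀ x, c * min 1 ((x + y) ^ 2) ≤ - v1 x / v x) ∧
    ∃ C, 0 ≤ C ∧ ∀ x, -y ≤ x → v x ≤ C * Real.exp (-x ^ 2 / 2) ∧
      |v1 x| ≤ C * (1 + |x|) * Real.exp (-x ^ 2 / 2) := by
  obtain ⟨y, v, v1, y0, y1, vpos, dv, dv1, h0, hlt, hC⟩ := pc_v
  refine ⟨y, y ^ 3 / 2, v, v1, y0, y1, by positivity, vpos, dv, dv1, h0, ?_, hC⟩
  have y31 : y ^ 3 ≤ y := by
    have : y ^ 2 ≤ 1 := pow_le_one₀ y0.le y1.le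
    nlinarith
  have dp : ∀ x, HasDerivAt (fun x => - v1 x / v x) (y ^ 2 - x ^ 2 + (v1 x / v x) ^ 2) x := by
    intro x
    refine ((dv1 x).neg.div (dv x) (vpos x).ne').congr_deriv ?_
    have := (vpos x).ne'
    field_simp
    simp only [Pi.neg_apply]
    ring
  set p : ℝ → ℝ := fun x => - v1 x / v x with hp
  have cp : Continuous p := continuous_iff_continuousAt.2 fun x => (dp x).continuousAt
  have p0 : p (-y) = 0 := by simp [hp, h0]
  have mono1 : MonotoneOn (fun s => p s - y / 2 * (s + y) ^ 2) (Icc (-y) 0) := by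
    refine monotoneOn_of_hasDerivWithinAt_nonneg (f' := fun s => y ^ 2 - s ^ 2 + (v1 s / v s) ^ 2 -
      y * (s + y)) (convex_Icc _ _) (by fun_prop) ?_ ?_
    · intro s _
      refine HasDerivAt.hasDerivWithinAt ?_
      refine ((dp s).sub ((((hasDerivAt_id s).add_const y).pow 2).const_mul (y/2))).congr_deriv ?_
      simp; ring
    · intro s hs
      rw [interior_Icc] at hs
      have := sq_nonneg (v1 s / v s)
      nlinarith [hs.1, hs.2]
  have mono2 : MonotoneOn p (Icc 0 y) := by
    refine monotoneOn_of_hasDerivWithinAt_nonneg (convex_Icc _ _) (by fun_prop)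
      (fun s _ => (dp s).hasDerivWithinAt) ?_
    · intro s hs
      rw [interior_Icc] at hs
      have := sq_nonneg (v1 s / v s)
      nlinarith [hs.1, hs.2]
  have mid : ∀ x ∈ Icc (-y) 0, y / 2 * (x + y) ^ 2 ≤ p x := by
    intro x hx
    have := mono1 (left_mem_Icc.2 (by linarith)) hx hx.1
    simp only [p0] at this
    simp at this
    linarith
  have hmin1 : ∀ x : ℝ, min 1 ((x + y) ^ 2) ≤ 1 := fun x => min_le_left _ _
  have hmin2 : ∀ x : ℝ, min 1 ((x + y) ^ 2) ≤ (x + y) ^ 2 := fun x => min_le_right _ _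
  have hmin0 : ∀ x : ℝ, 0 ≤ min 1 ((x + y) ^ 2) := fun x => le_min zero_le_one (sq_nonneg _)
  intro x
  change _ ≤ p x
  rcases le_total x (-y) with h | h
  · have hδ : min 1 ((x + y) ^ 2) = (min 1 (-y - x)) ^ 2 := by
      rcases le_total 1 (-y - x) with h' | h'
      · rw [min_eq_left h', min_eq_left (by nlinarith)]; norm_num
      · rw [min_eq_right h', min_eq_right (by nlinarith)]; ring
    have := pc_left y0 y1 vpos dv dv1 h0 x (min 1 (-y - x)) (le_min zero_le_one (by linarith))
      (min_le_left _ _) (by have := min_le_right 1 (-y - x); linarith)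
    rw [hp]
    simp only
    rw [le_div_iff₀ (vpos x), hδ]
    refine le_trans ?_ this
    have h2 : 0 ≤ (min 1 (-y - x)) ^ 2 * v x := mul_nonneg (sq_nonneg _) (vpos x).le
    nlinarith
  · rcases le_total x 0 with h' | h'
    · have := mid x ⟨h, h'⟩
      nlinarith [hmin2 x, hmin0 x]
    · have m0 := mid 0 ⟨by linarith, le_rfl⟩
      have hy3 : y ^ 3 / 2 * min 1 ((x + y) ^ 2) ≤ y ^ 3 / 2 :=
        mul_le_of_le_one_right (by positivity) (hmin1 x)
      rcases le_total x y with h'' | h''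
      · have := mono2 (left_mem_Icc.2 y0.le) ⟨h', h''⟩ h'
        nlinarith
      · have : x ≤ p x := by
          rw [hp]; simp only
          rw [le_div_iff₀ (vpos x)]
          have := hlt x
          linarith
        nlinarith [pow_pos y0 3]

lemma pc_P : ∃ (y c : ℝ) (v v1 : ℝ → ℝ), 0 < y ∧ y < 1 ∧ 0 < c ∧ c ≤ 1 ∧ (∀ x, 0 < v x) ∧
    (∀ x, HasDerivAt v (v1 x) x) ∧ (∀ x, HasDerivAt v1 ((x ^ 2 - y ^ 2) * v x) x) ∧
    v1 (-y) = 0 ∧ 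
    (∃ C, 0 ≤ C ∧ ∀ x, -y ≤ x → v x ≤ C * Real.exp (-x ^ 2 / 2) ∧
      |v1 x| ≤ C * (1 + |x|) * Real.exp (-x ^ 2 / 2)) ∧
    ∀ σ : ℝ, ∃ P P' : ℝ → ℝ, (∀ x, HasDerivAt P (P' x) x) ∧ Continuous P' ∧ 0 ≤ P σ ∧
      ∀ x, y ^ 2 + c * min 1 ((σ + y) ^ 2) ≤ P' x + x ^ 2 - P x ^ 2 := by
  obtain ⟨y, c, v, v1, y0, y1, c0, vpos, dv, dv1, h0, hp, hC⟩ := pc_p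
  have cv : Continuous v := continuous_iff_continuousAt.2 fun x => (dv x).continuousAt
  have cv1 : Continuous v1 := continuous_iff_continuousAt.2 fun x => (dv1 x).continuousAt
  set k := min (1/5) (2 * c) with hk
  have k0 : 0 < k := lt_min (by norm_num) (by linarith)
  have k5 : k ≤ 1/5 := min_le_left _ _
  have k2 : k ≤ 2 * c := min_le_right _ _
  set c2 := min (c / 5) (k / 50) with hc2
  have c20 : 0 < c2 := lt_min (by linarith) (by linarith)
  have c2c : c2 ≤ c / 5 := min_le_left _ _
  have c2k : c2 ≤ k / 50 := min_le_right _ _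
  refine ⟨y, c2 * k / 2, v, v1, y0, y1, by positivity, by nlinarith, vpos, dv, dv1, h0, hC, ?_⟩
  intro σ
  have hmin1 : ∀ x : ℝ, min 1 ((x + y) ^ 2) ≤ 1 := fun x => min_le_left _ _
  have hmin0 : ∀ x : ℝ, 0 ≤ min 1 ((x + y) ^ 2) := fun x => le_min zero_le_one (sq_nonneg _)
  set ε := c2 * min 1 ((σ + y) ^ 2) with hε
  have ε0 : 0 ≤ ε := mul_nonneg c20.le (hmin0 σ)
  have ε1 : ε ≤ c2 := mul_le_of_le_one_right c20.le (hmin1 σ)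
  have q1 : ∀ x : ℝ, 1 ≤ 3 - Real.arctan x := fun x => by
    have := Real.arctan_lt_pi_div_two x
    have := Real.pi_lt_four
    linarith
  have q5 : ∀ x : ℝ, 3 - Real.arctan x ≤ 5 := fun x => by
    have := Real.neg_pi_div_two_lt_arctan x
    have := Real.pi_lt_four
    linarith
  refine ⟨fun x => - v1 x / v x - ε * (3 - Real.arctan x),
    fun x => y ^ 2 - x ^ 2 + (v1 x / v x) ^ 2 + ε * (1 / (1 + x ^ 2)), ?_, ?_, ?_, ?_⟩
  · intro x
    have h1 : HasDerivAt (fun x => - v1 x / v x) (y ^ 2 - x ^ 2 + (v1 x / v x) ^ 2) x := by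
      refine ((dv1 x).neg.div (dv x) (vpos x).ne').congr_deriv ?_
      have := (vpos x).ne'
      field_simp
      simp only [Pi.neg_apply]
      ring
    refine (h1.sub (((Real.hasDerivAt_arctan x).const_sub 3).const_mul ε)).congr_deriv ?_
    ring
  · have h1 : ∀ x, v x ≠ 0 := fun x => (vpos x).ne'
    have h2 : ∀ x : ℝ, 1 + x ^ 2 ≠ 0 := fun x => by positivity
    have := (cv1.div cv h1)
    have h3 := (continuous_const (y := (1:ℝ))).div (by fun_prop : Continuous fun x : ℝ => 1 + x ^ 2) h2
    fun_prop
  · have := hp σ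
    have h2 : ε * 5 ≤ c * min 1 ((σ + y) ^ 2) := by
      rw [hε]; nlinarith [hmin0 σ]
    have := mul_le_mul_of_nonneg_left (q5 σ) ε0
    linarith
  · intro x
    simp only
    set p := - v1 x / v x with hpx
    set q := 3 - Real.arctan x with hq
    have hpp : (v1 x / v x) ^ 2 = p ^ 2 := by rw [hpx]; ring
    rw [hpp]
    have hp0 : c * min 1 ((x + y) ^ 2) ≤ p := hp x
    have pn : 0 ≤ p := le_trans (mul_nonneg c0.le (hmin0 x)) hp0
    have hq1 : 1 ≤ q := q1 x
    have hq5 : q ≤ 5 := q5 x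
    have hpq : p ≤ p * q := le_mul_of_one_le_right pn hq1
    have hi : 0 ≤ 1 / (1 + x ^ 2) := by positivity
    have hk' : k ≤ 1 / (1 + x ^ 2) + 2 * p * q := by
      rcases le_total ((x + y) ^ 2) 1 with h | h
      · have hxb : x ^ 2 ≤ 4 := by
          have := abs_le_one_iff_mul_self_le_one.2 (by nlinarith : (x + y) * (x + y) ≤ 1)
          rw [abs_le] at this
          nlinarith
        have : (1:ℝ)/5 ≤ 1 / (1 + x ^ 2) := one_div_le_one_div_of_le (by positivity) (by linarith)
        nlinarith
      · rw [min_eq_left h] at hp0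
        nlinarith
    have hq2 : q ^ 2 ≤ 25 := by nlinarith
    have e1 : ε * k ≤ ε * (1 / (1 + x ^ 2) + 2 * p * q) := mul_le_mul_of_nonneg_left hk' ε0
    have e2 : ε ^ 2 * q ^ 2 ≤ ε * (k / 2) := by
      have : ε * q ^ 2 ≤ k / 2 := by nlinarith
      nlinarith
    have e3 : c2 * k / 2 * min 1 ((σ + y) ^ 2) = ε * (k / 2) := by rw [hε]; ring
    rw [e3]
    nlinarith


lemma deGennes_nonneg_mem (ξ : ℝ) : ∀ q ∈ { q : ℝ | ∃ u : ℝ → ℂ, ContDiff ℝ 1 u ∧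
    IntegrableOn (fun t => ‖u t‖ ^ 2) (Ioi 0) ∧
    IntegrableOn (fun t => ‖deriv u t‖ ^ 2 + (t + ξ) ^ 2 * ‖u t‖ ^ 2) (Ioi 0) ∧
    0 < (∫ t in Ioi (0:ℝ), ‖u t‖ ^ 2) ∧
    q = (∫ t in Ioi (0:ℝ), (‖deriv u t‖ ^ 2 + (t + ξ) ^ 2 * ‖u t‖ ^ 2)) /
        ∫ t in Ioi (0:ℝ), ‖u t‖ ^ 2 }, 0 ≤ q := by
  rintro q ⟨u, -, -, -, h, rfl⟩
  refine div_nonneg (integral_nonneg fun t => ?_) h.le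
  positivity

lemma gauss_poly_int (C y : ℝ) :
    IntegrableOn (fun t : ℝ => C * (1 + (t - y) ^ 2) * Real.exp (-(t - y) ^ 2)) (Ioi 0) := by
  have h1 : Integrable (fun x : ℝ => Real.exp (-x ^ 2)) := by
    simpa using integrable_exp_neg_mul_sq (b := 1) one_pos
  have h2 : Integrable (fun x : ℝ => x ^ 2 * Real.exp (-x ^ 2)) := by
    have := integrable_rpow_mul_exp_neg_mul_sq (b := 1) one_pos (s := 2) (by norm_num)
    simpa using this
  have h3 : Integrable (fun x : ℝ => C * (1 + x ^ 2) * Real.exp (-x ^ 2)) := by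
    refine ((h1.add h2).const_mul C).congr (Eventually.of_forall fun x => ?_)
    simp; ring
  exact (h3.comp_sub_right y).integrableOn

lemma theta0_le {y : ℝ} {v v1 : ℝ → ℝ} (vpos : ∀ x, 0 < v x)
    (dv : ∀ x, HasDerivAt v (v1 x) x) (dv1 : ∀ x, HasDerivAt v1 ((x ^ 2 - y ^ 2) * v x) x)
    (h0 : v1 (-y) = 0)
    (hC : ∃ C, 0 ≤ C ∧ ∀ x, -y ≤ x → v x ≤ C * Real.exp (-x ^ 2 / 2) ∧
      |v1 x| ≤ C * (1 + |x|) * Real.exp (-x ^ 2 / 2)) : Theta0 ≤ y ^ 2 := by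
  have cv : Continuous v := continuous_iff_continuousAt.2 fun x => (dv x).continuousAt
  have cv1 : Continuous v1 := continuous_iff_continuousAt.2 fun x => (dv1 x).continuousAt
  obtain ⟨C, C0, hC⟩ := hC
  have hbd : BddBelow (range deGennes) := ⟨0, by
    rintro _ ⟨ξ, rfl⟩
    exact Real.sInf_nonneg (deGennes_nonneg_mem ξ)⟩
  refine (ciInf_le hbd (-y)).trans ?_
  refine csInf_le ⟨0, fun q hq => deGennes_nonneg_mem (-y) q hq⟩ ?_
  have hexp : ∀ x : ℝ, Real.exp (-x ^ 2 / 2) ^ 2 = Real.exp (-x ^ 2) := fun x => by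
    rw [sq, ← Real.exp_add]; congr 1; ring
  have b1 : ∀ x, -y ≤ x → v x ^ 2 ≤ C ^ 2 * Real.exp (-x ^ 2) := fun x hx => by
    rw [← hexp, ← mul_pow]
    exact pow_le_pow_left₀ (vpos x).le (hC x hx).1 2
  have b2 : ∀ x, -y ≤ x → v1 x ^ 2 ≤ 2 * C ^ 2 * (1 + x ^ 2) * Real.exp (-x ^ 2) := fun x hx => by
    have h := pow_le_pow_left₀ (abs_nonneg _) (hC x hx).2 2
    rw [sq_abs, mul_pow, mul_pow, hexp] at h
    refine h.trans (mul_le_mul_of_nonneg_right ?_ (Real.exp_pos _).le)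
    have : (1 + |x|) ^ 2 ≤ 2 * (1 + x ^ 2) := by nlinarith [sq_abs x, sq_nonneg (1 - |x|)]
    nlinarith [sq_nonneg C]
  have i1 : IntegrableOn (fun t => v (t - y) ^ 2) (Ioi 0) := by
    refine Integrable.mono' (gauss_poly_int (C ^ 2) y) (by fun_prop) ?_
    refine (ae_restrict_mem measurableSet_Ioi).mono fun t ht => ?_
    have ht : 0 < t := ht
    rw [Real.norm_of_nonneg (sq_nonneg _)]
    refine (b1 (t - y) (by linarith)).trans (mul_le_mul_of_nonneg_right ?_ (Real.exp_pos _).le)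
    nlinarith [mul_nonneg (sq_nonneg C) (sq_nonneg (t - y))]
  have i2 : IntegrableOn (fun t => (t - y) ^ 2 * v (t - y) ^ 2) (Ioi 0) := by
    refine Integrable.mono' (gauss_poly_int (C ^ 2) y) (by fun_prop) ?_
    refine (ae_restrict_mem measurableSet_Ioi).mono fun t ht => ?_
    have ht : 0 < t := ht
    rw [Real.norm_of_nonneg (by positivity)]
    refine (mul_le_mul_of_nonneg_left (b1 (t - y) (by linarith)) (sq_nonneg _)).trans ?_
    nlinarith [mul_nonneg (sq_nonneg C) (Real.exp_pos (-(t - y) ^ 2)).le]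
  have i3 : IntegrableOn (fun t => v1 (t - y) ^ 2) (Ioi 0) := by
    refine Integrable.mono' (gauss_poly_int (2 * C ^ 2) y) (by fun_prop) ?_
    refine (ae_restrict_mem measurableSet_Ioi).mono fun t ht => ?_
    have ht : 0 < t := ht
    rw [Real.norm_of_nonneg (sq_nonneg _)]
    exact b2 (t - y) (by linarith)
  have i4 : IntegrableOn (fun t => v (t - y) * v1 (t - y)) (Ioi 0) := by
    refine Integrable.mono' (i1.add i3) (by fun_prop) (Eventually.of_forall fun t => ?_)
    rw [Real.norm_eq_abs, abs_mul]
    simp only [Pi.add_apply]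
    nlinarith [sq_abs (v (t - y)), sq_abs (v1 (t - y)), sq_nonneg (|v (t - y)| - |v1 (t - y)|),
      sq_nonneg (v (t-y)), sq_nonneg (v1 (t-y))]
  have dd : ∀ t, HasDerivAt (fun t => v (t - y) * v1 (t - y))
      (v1 (t - y) ^ 2 + (t - y) ^ 2 * v (t - y) ^ 2 - y ^ 2 * v (t - y) ^ 2) t := by
    intro t
    have e1 : HasDerivAt (fun t => v (t - y)) (v1 (t - y)) t := (dv (t - y)).comp_sub_const t y
    have e2 := (dv1 (t - y)).comp_sub_const t y
    refine (e1.mul e2).congr_deriv ?_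
    ring
  have i5 : IntegrableOn (fun t => v1 (t - y) ^ 2 + (t - y) ^ 2 * v (t - y) ^ 2) (Ioi 0) := i3.add i2
  have i6 : IntegrableOn (fun t => v1 (t - y) ^ 2 + (t - y) ^ 2 * v (t - y) ^ 2
     - y ^ 2 * v (t - y) ^ 2) (Ioi 0) := i5.sub (i1.const_mul _)
  have ht := tendsto_zero_of_hasDerivAt_of_integrableOn_Ioi (fun s _ => dd s) i6 i4
  have h := integral_Ioi_of_hasDerivAt_of_tendsto' (fun s _ => dd s) i6 ht
  rw [integral_sub i5 (i1.const_mul _), integral_const_mul] at h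
  have ipos : 0 < ∫ t in Ioi (0:ℝ), v (t - y) ^ 2 := by
    rw [setIntegral_pos_iff_support_of_nonneg_ae (Eventually.of_forall fun t => sq_nonneg _) i1]
    have : Ioi (0:ℝ) ⊆ (Function.support fun t : ℝ => v (t - y) ^ 2) := by
      intro s hs
      have := vpos (s - y)
      exact (pow_pos this 2).ne'
    rw [inter_eq_self_of_subset_right this]
    simp
  have du : ∀ t, HasDerivAt (fun t : ℝ => ((v (t - y) : ℝ) : ℂ)) ((v1 (t - y) : ℝ) : ℂ) t := fun t =>
    ((dv (t - y)).comp_sub_const t y).ofReal_comp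
  have hder : deriv (fun t : ℝ => ((v (t - y) : ℝ) : ℂ)) = fun t => ((v1 (t - y) : ℝ) : ℂ) :=
    funext fun t => (du t).deriv
  have n1 : ∀ r : ℝ, ‖(r : ℂ)‖ ^ 2 = r ^ 2 := fun r => by
    rw [Complex.norm_real, Real.norm_eq_abs, sq_abs]
  refine ⟨fun t => ((v (t - y) : ℝ) : ℂ), ?_, ?_, ?_, ?_, ?_⟩
  · rw [contDiff_one_iff_deriv]
    refine ⟨fun t => (du t).differentiableAt, ?_⟩
    rw [hder]
    fun_prop
  · simpa only [n1] using i1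
  · simpa only [hder, n1, ← sub_eq_add_neg] using i5
  · simpa only [n1] using ipos
  · simp only [hder, n1, ← sub_eq_add_neg]
    rw [eq_div_iff ipos.ne']
    simp only [zero_sub, h0, mul_zero, sub_zero] at h
    linarith

lemma deriv_normSq {u u' : ℝ → ℂ} {t : ℝ} (h : HasDerivAt u (u' t) t) :
    HasDerivAt (fun t => ‖u t‖ ^ 2) (2 * (u t * (starRingEnd ℂ) (u' t)).re) t := by
  have := h.norm_sq
  refine this.congr_deriv ?_
  rw [← real_inner_comm]
  simp [Complex.inner]

lemma normSq_add_mul (a b : ℂ) (P : ℝ) :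
    ‖b + P * a‖ ^ 2 = ‖b‖ ^ 2 + P * (2 * (a * (starRingEnd ℂ) b).re) + P ^ 2 * ‖a‖ ^ 2 := by
  simp only [← Complex.normSq_eq_norm_sq, Complex.normSq_apply]
  simp
  ring

/-- one-dimensional lower bound -/
lemma oneD {σ E : ℝ} {P P' : ℝ → ℝ} (dP : ∀ x, HasDerivAt P (P' x) x) (cP : Continuous P')
    (hσ : 0 ≤ P σ) (hE : ∀ x, E ≤ P' x + x ^ 2 - P x ^ 2)
    {u u' : ℝ → ℂ} (du : ∀ t, HasDerivAt u (u' t) t) (cu : Continuous u')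
    (hu : HasCompactSupport u) (hu' : HasCompactSupport u') :
    E * (∫ t in Ioi (0:ℝ), ‖u t‖ ^ 2) ≤
      ∫ t in Ioi (0:ℝ), (‖u' t‖ ^ 2 + (t + σ) ^ 2 * ‖u t‖ ^ 2) := by
  have cu0 : Continuous u := continuous_iff_continuousAt.2 fun x => (du x).continuousAt
  have cP0 : Continuous P := continuous_iff_continuousAt.2 fun x => (dP x).continuousAt
  have s1 : HasCompactSupport (fun t => ‖u t‖ ^ 2) := hu.comp_left (g := fun z : ℂ => ‖z‖ ^ 2) (by simp)
  have s2 : HasCompactSupport (fun t => ‖u' t‖ ^ 2) := hu'.comp_left (g := fun z : ℂ => ‖z‖ ^ 2) (by simp)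
  set G : ℝ → ℝ := fun t => P (t + σ) * ‖u t‖ ^ 2
  set G' : ℝ → ℝ := fun t => P' (t + σ) * ‖u t‖ ^ 2
    + P (t + σ) * (2 * (u t * (starRingEnd ℂ) (u' t)).re)
  have dG : ∀ t, HasDerivAt G (G' t) t := fun t =>
    ((dP (t + σ)).comp_add_const t σ).mul (deriv_normSq (du t))
  have sG : HasCompactSupport G := s1.mul_left
  have sG' : HasCompactSupport G' := by
    refine HasCompactSupport.add s1.mul_left (HasCompactSupport.mul_left ?_)
    refine HasCompactSupport.mono hu fun t ht => ?_
    contrapose! ht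
    simp at ht
    simp [ht]
  have cG : Continuous G := by fun_prop
  have cG' : Continuous G' := by
    have : Continuous fun t => (starRingEnd ℂ) (u' t) := Complex.continuous_conj.comp cu
    have := Complex.continuous_re.comp (cu0.mul this)
    fun_prop
  have iG' := (cG'.integrable_of_hasCompactSupport (μ := volume) sG').integrableOn (s := Ioi 0)
  have iG := (cG.integrable_of_hasCompactSupport (μ := volume) sG).integrableOn (s := Ioi 0)
  have ht := tendsto_zero_of_hasDerivAt_of_integrableOn_Ioi (fun s _ => dG s) iG' iG
  have h := integral_Ioi_of_hasDerivAt_of_tendsto' (fun s _ => dG s) iG' ht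
  have hG0 : 0 ≤ G 0 := by
    simp only [G, zero_add]; positivity
  have j1 := ((by fun_prop : Continuous fun t => E * ‖u t‖ ^ 2).integrable_of_hasCompactSupport (μ := volume)
    s1.mul_left).integrableOn (s := Ioi 0)
  have j2 := ((by fun_prop : Continuous fun t => (‖u' t‖ ^ 2 + (t + σ) ^ 2 * ‖u t‖ ^ 2)
    ).integrable_of_hasCompactSupport (μ := volume) (s2.add s1.mul_left)).integrableOn (s := Ioi 0)
  have hm := setIntegral_mono (j1.sub iG') j2 (fun t => by
    have h1 := sq_nonneg ‖u' t + (P (t + σ) : ℂ) * u t‖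
    rw [normSq_add_mul] at h1
    have h2 := mul_le_mul_of_nonneg_right (hE (t + σ)) (sq_nonneg ‖u t‖)
    simp only [G', Pi.sub_apply]
    nlinarith)
  simp only [Pi.sub_apply] at hm
  rw [integral_sub j1 iG', integral_const_mul] at hm
  linarith


lemma cc_slice1 {E : Type*} [Zero E] {f : ℝ × ℝ → E} (hf : HasCompactSupport f) (r : ℝ) :
    HasCompactSupport (fun t => f (t, r)) := by
  refine HasCompactSupport.intro (K := Prod.fst '' tsupport f) (hf.isCompact.image continuous_fst) ?_
  intro t ht
  by_contra h
  exact ht ⟨(t, r), subset_tsupport f h, rfl⟩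

lemma cc_slice2 {E : Type*} [Zero E] {f : ℝ × ℝ → E} (hf : HasCompactSupport f) (t : ℝ) :
    HasCompactSupport (fun r => f (t, r)) := by
  refine HasCompactSupport.intro (K := Prod.snd '' tsupport f) (hf.isCompact.image continuous_snd) ?_
  intro r ht
  by_contra h
  exact ht ⟨(t, r), subset_tsupport f h, rfl⟩

lemma cc_int {f : ℝ × ℝ → ℝ} (cf : Continuous f) (hf : HasCompactSupport f) :
    IntegrableOn f halfPlane :=
  (cf.integrable_of_hasCompactSupport (μ := volume) hf).integrableOn

lemma hp_meas : (volume : Measure (ℝ × ℝ)).restrict halfPlane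
    = ((volume : Measure ℝ).restrict (Ioi 0)).prod (volume : Measure ℝ) := by
  rw [halfPlane, Measure.volume_eq_prod, ← Measure.prod_restrict, Measure.restrict_univ]

lemma hp_integral {f : ℝ × ℝ → ℝ} (cf : Continuous f) (hf : HasCompactSupport f) :
    ∫ p in halfPlane, f p = ∫ r : ℝ, ∫ t in Ioi (0:ℝ), f (t, r) := by
  have := cc_int cf hf
  rw [IntegrableOn, hp_meas] at this
  rw [hp_meas, integral_prod_symm _ this]

lemma int_d1 {G G' : ℝ × ℝ → ℝ} (cG : Continuous G) (cG' : Continuous G')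
    (hG : HasCompactSupport G) (hG' : HasCompactSupport G')
    (d : ∀ t r, HasDerivAt (fun s => G (s, r)) (G' (t, r)) t) (h0 : ∀ r, G (0, r) = 0) :
    ∫ p in halfPlane, G' p = 0 := by
  rw [hp_integral cG' hG']
  have : ∀ r : ℝ, ∫ t in Ioi (0:ℝ), G' (t, r) = 0 := by
    intro r
    have i1 := ((by fun_prop : Continuous fun t => G' (t, r)).integrable_of_hasCompactSupport
      (μ := volume) (cc_slice1 hG' r)).integrableOn (s := Ioi 0)
    have i2 := ((by fun_prop : Continuous fun t => G (t, r)).integrable_of_hasCompactSupport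
      (μ := volume) (cc_slice1 hG r)).integrableOn (s := Ioi 0)
    have ht := tendsto_zero_of_hasDerivAt_of_integrableOn_Ioi (fun s _ => d s r) i1 i2
    have h := integral_Ioi_of_hasDerivAt_of_tendsto' (fun s _ => d s r) i1 ht
    rw [h, h0]; simp
  simp [this]

lemma int_d2 {G G' : ℝ × ℝ → ℝ} (cG : Continuous G) (cG' : Continuous G')
    (hG : HasCompactSupport G) (hG' : HasCompactSupport G')
    (d : ∀ t r, HasDerivAt (fun s => G (t, s)) (G' (t, r)) r) :
    ∫ p in halfPlane, G' p = 0 := by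
  have hi := cc_int cG' hG'
  rw [IntegrableOn, hp_meas] at hi
  rw [hp_meas, integral_prod _ hi]
  have : ∀ t : ℝ, ∫ r : ℝ, G' (t, r) = 0 := by
    intro t
    have i1 := ((by fun_prop : Continuous fun r => G' (t, r)).integrable_of_hasCompactSupport
      (μ := volume) (cc_slice2 hG' t))
    have i2 := ((by fun_prop : Continuous fun r => G (t, r)).integrable_of_hasCompactSupport
      (μ := volume) (cc_slice2 hG t))
    exact integral_eq_zero_of_hasDerivAt_of_integrable (d t) i1 i2
  simp [this]

lemma cs_normSq {f : ℝ × ℝ → ℂ} (hf : HasCompactSupport f) :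
    HasCompactSupport (fun p => ‖f p‖ ^ 2) := hf.comp_left (g := fun z : ℂ => ‖z‖ ^ 2) (by simp)

lemma cs_inner {f g : ℝ × ℝ → ℂ} (hf : HasCompactSupport f) :
    HasCompactSupport (fun p => (2 * (f p * (starRingEnd ℂ) (g p)).re)) := by
  refine HasCompactSupport.mono hf fun t ht => ?_
  contrapose! ht
  simp at ht
  simp [ht]

lemma ct_inner {X : Type*} [TopologicalSpace X] {f g : X → ℂ} (hf : Continuous f) (hg : Continuous g) :
    Continuous (fun p => (f p * (starRingEnd ℂ) (g p)).re) :=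
  Complex.continuous_re.comp (hf.mul (Complex.continuous_conj.comp hg))

lemma W_ineq {W W' : ℝ → ℝ} (dW : ∀ x, HasDerivAt W (W' x) x) (cW : Continuous W')
    {φ φ2 : ℝ × ℝ → ℂ} (cφ : Continuous φ) (cφ2 : Continuous φ2)
    (hφ : HasCompactSupport φ) (hφ2 : HasCompactSupport φ2)
    (d : ∀ t r, HasDerivAt (fun s => φ (t, s)) (φ2 (t, r)) r) :
    ∫ p in halfPlane, W' p.2 * ‖φ p‖ ^ 2 ≤
      ∫ p in halfPlane, (‖φ2 p‖ ^ 2 + W p.2 ^ 2 * ‖φ p‖ ^ 2) := by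
  have cW0 : Continuous W := continuous_iff_continuousAt.2 fun x => (dW x).continuousAt
  have s1 := cs_normSq hφ
  have s2 := cs_normSq hφ2
  have s3 := cs_inner (g := φ2) hφ
  have c3 := ct_inner cφ cφ2
  have hd : ∀ t r, HasDerivAt (fun s => W s * ‖φ (t, s)‖ ^ 2) (W' r * ‖φ (t, r)‖ ^ 2 + W r * (2 * (φ (t,r) * (starRingEnd ℂ) (φ2 (t,r))).re)) r := (fun t r => (dW r).mul (deriv_normSq (u := fun s => φ (t, s)) (u' := fun s => φ2 (t, s)) (d t r)))
  have m1 : HasCompactSupport (fun p : ℝ × ℝ => W' p.2 * ‖φ p‖ ^ 2) := s1.mul_left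
  have m2 : HasCompactSupport (fun p : ℝ × ℝ => W p.2 * (2 * (φ p * (starRingEnd ℂ) (φ2 p)).re)) := s3.mul_left
  have c4 : Continuous (fun p : ℝ × ℝ => W p.2 * (2 * (φ p * (starRingEnd ℂ) (φ2 p)).re)) := by fun_prop
  have i1 : IntegrableOn (fun p : ℝ × ℝ => W' p.2 * ‖φ p‖ ^ 2) halfPlane := cc_int (by fun_prop) m1
  have i2 := cc_int c4 m2
  have m3 : HasCompactSupport (fun p : ℝ × ℝ => W p.2 ^ 2 * ‖φ p‖ ^ 2) := s1.mul_left
  have i3 : IntegrableOn (fun p : ℝ × ℝ => ‖φ2 p‖ ^ 2 + W p.2 ^ 2 * ‖φ p‖ ^ 2) halfPlane :=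
    cc_int (by fun_prop) (s2.add m3)
  have m4 : HasCompactSupport (fun p : ℝ × ℝ => W p.2 * ‖φ p‖ ^ 2) := s1.mul_left
  have m5 : HasCompactSupport (fun p : ℝ × ℝ => W' p.2 * ‖φ p‖ ^ 2
    + W p.2 * (2 * (φ p * (starRingEnd ℂ) (φ2 p)).re)) := m1.add m2
  have c6 : Continuous (fun p : ℝ × ℝ => W' p.2 * ‖φ p‖ ^ 2) := by fun_prop
  have c5 : Continuous (fun p : ℝ × ℝ => W' p.2 * ‖φ p‖ ^ 2
    + W p.2 * (2 * (φ p * (starRingEnd ℂ) (φ2 p)).re)) := c6.add c4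
  have c7 : Continuous (fun p : ℝ × ℝ => W p.2 * ‖φ p‖ ^ 2) := by fun_prop
  have h := int_d2 c7 c5 m4 m5 hd
  rw [integral_add i1 i2] at h
  have hm : ∫ p in halfPlane, -(W p.2 * (2 * (φ p * (starRingEnd ℂ) (φ2 p)).re)) ≤
      ∫ p in halfPlane, (‖φ2 p‖ ^ 2 + W p.2 ^ 2 * ‖φ p‖ ^ 2) := by
    refine setIntegral_mono i2.neg i3 (fun p => ?_)
    have h1 := sq_nonneg ‖φ2 p + (W p.2 : ℂ) * φ p‖
    rw [normSq_add_mul] at h1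
    linarith
  rw [integral_neg] at hm
  linarith

lemma fiber_ineq {y c : ℝ}
    (hP : ∀ σ : ℝ, ∃ P P' : ℝ → ℝ, (∀ x, HasDerivAt P (P' x) x) ∧ Continuous P' ∧ 0 ≤ P σ ∧
      ∀ x, y ^ 2 + c * min 1 ((σ + y) ^ 2) ≤ P' x + x ^ 2 - P x ^ 2)
    {σ : ℝ → ℝ} (cσ : Continuous σ)
    {φ φ1 : ℝ × ℝ → ℂ} (cφ : Continuous φ) (cφ1 : Continuous φ1)
    (hφ : HasCompactSupport φ) (hφ1 : HasCompactSupport φ1)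
    (d : ∀ t r, HasDerivAt (fun s => φ (s, r)) (φ1 (t, r)) t) :
    ∫ p in halfPlane, (y ^ 2 + c * min 1 ((σ p.2 + y) ^ 2)) * ‖φ p‖ ^ 2 ≤
      ∫ p in halfPlane, (‖φ1 p‖ ^ 2 + (p.1 + σ p.2) ^ 2 * ‖φ p‖ ^ 2) := by
  have s1 := cs_normSq hφ
  have s2 := cs_normSq hφ1
  have cm : Continuous (fun p : ℝ × ℝ => (y ^ 2 + c * min 1 ((σ p.2 + y) ^ 2)) * ‖φ p‖ ^ 2) := by
    fun_prop
  have cr : Continuous (fun p : ℝ × ℝ => (‖φ1 p‖ ^ 2 + (p.1 + σ p.2) ^ 2 * ‖φ p‖ ^ 2)) := by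
    fun_prop
  have i1 := cc_int cm s1.mul_left
  have i2 := cc_int cr (s2.add s1.mul_left)
  rw [hp_integral cm s1.mul_left, hp_integral cr (s2.add s1.mul_left)]
  rw [IntegrableOn, hp_meas] at i1 i2
  refine integral_mono i1.integral_prod_right i2.integral_prod_right fun r => ?_
  obtain ⟨P, P', dP, cP, hσ, hE⟩ := hP (σ r)
  have := oneD dP cP hσ hE (u := fun t => φ (t, r)) (u' := fun t => φ1 (t, r)) (fun t => d t r)
    (by fun_prop) (cc_slice1 hφ r) (cc_slice1 hφ1 r)
  rw [← integral_const_mul] at this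
  exact this

lemma alg_pt (g g1 : ℝ) (a b : ℂ) : ‖(g1 : ℂ) * a + g * b‖ ^ 2 =
    2 * g * g1 * (a * (starRingEnd ℂ) b).re + g ^ 2 * ‖b‖ ^ 2 + g1 ^ 2 * ‖a‖ ^ 2 := by
  simp only [← Complex.normSq_eq_norm_sq, Complex.normSq_apply]
  simp
  ring

lemma alg_pde {a b d : ℂ} {k V l : ℝ} (h : -b - (k : ℂ) * d + (V : ℂ) * a = (l : ℂ) * a) :
    (a * (starRingEnd ℂ) b).re + k * (a * (starRingEnd ℂ) d).re = (V - l) * ‖a‖ ^ 2 := by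
  have h2 : b = (V - l : ℂ) * a - (k : ℂ) * d := by linear_combination -h
  rw [h2]
  simp only [← Complex.normSq_eq_norm_sq, Complex.normSq_apply]
  simp
  ring

lemma deriv_inner_pt {u u1 u11 : ℝ → ℂ} {t : ℝ} (h : HasDerivAt u (u1 t) t)
    (h1 : HasDerivAt u1 (u11 t) t) :
    HasDerivAt (fun s => (u s * (starRingEnd ℂ) (u1 s)).re)
      (‖u1 t‖ ^ 2 + (u t * (starRingEnd ℂ) (u11 t)).re) t := by
  have hc : HasDerivAt (fun s => (starRingEnd ℂ) (u1 s)) ((starRingEnd ℂ) (u11 t)) t := by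
    simpa using h1.star
  have := (h.mul hc)
  have h3 := (Complex.reCLM.hasFDerivAt.comp_hasDerivAt t this)
  refine h3.congr_deriv ?_
  simp [← Complex.normSq_eq_norm_sq, Complex.normSq_apply]

section energy
variable {g g1 g2 : ℝ × ℝ → ℝ} {ψ ψ1 ψ2 ψ11 ψ22 : ℝ × ℝ → ℂ} {V : ℝ × ℝ → ℝ} {k l : ℝ}

lemma en1 (cg : Continuous g) (cg1 : Continuous g1)
    (hg : HasCompactSupport g) (hg1 : HasCompactSupport g1)
    (dg1 : ∀ t r, HasDerivAt (fun s => g (s, r)) (g1 (t, r)) t)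
    (cψ : Continuous ψ) (cψ1 : Continuous ψ1) (cψ11 : Continuous ψ11)
    (d1 : ∀ t r, HasDerivAt (fun s => ψ (s, r)) (ψ1 (t, r)) t)
    (d11 : ∀ t r, HasDerivAt (fun s => ψ1 (s, r)) (ψ11 (t, r)) t)
    (bc : ∀ r, ψ1 (0, r) = 0) :
    IntegrableOn (fun p : ℝ × ℝ => 2 * g p * g1 p * (ψ p * (starRingEnd ℂ) (ψ1 p)).re
      + g p ^ 2 * (‖ψ1 p‖ ^ 2 + (ψ p * (starRingEnd ℂ) (ψ11 p)).re)) halfPlane ∧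
    ∫ p in halfPlane, (2 * g p * g1 p * (ψ p * (starRingEnd ℂ) (ψ1 p)).re
      + g p ^ 2 * (‖ψ1 p‖ ^ 2 + (ψ p * (starRingEnd ℂ) (ψ11 p)).re)) = 0 := by
  have c1 := ct_inner cψ cψ1
  have c11 := ct_inner cψ cψ11
  have hgg : HasCompactSupport (fun p => g p ^ 2) := hg.comp_left (g := fun z : ℝ => z ^ 2) (by simp)
  have cG1 : Continuous (fun p : ℝ × ℝ => g p ^ 2 * (ψ p * (starRingEnd ℂ) (ψ1 p)).re) := by fun_prop
  have cA1 : Continuous (fun p : ℝ × ℝ => 2 * g p * g1 p * (ψ p * (starRingEnd ℂ) (ψ1 p)).re) := by fun_prop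
  have cB1 : Continuous (fun p : ℝ × ℝ => g p ^ 2 * (‖ψ1 p‖ ^ 2 + (ψ p * (starRingEnd ℂ) (ψ11 p)).re)) := by fun_prop
  have cGG1 : Continuous (fun p : ℝ × ℝ => 2 * g p * g1 p * (ψ p * (starRingEnd ℂ) (ψ1 p)).re
      + g p ^ 2 * (‖ψ1 p‖ ^ 2 + (ψ p * (starRingEnd ℂ) (ψ11 p)).re)) := cA1.add cB1
  have sG1 : HasCompactSupport (fun p : ℝ × ℝ => g p ^ 2 * (ψ p * (starRingEnd ℂ) (ψ1 p)).re) := hgg.mul_right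
  have sA1' : HasCompactSupport (fun p : ℝ × ℝ => 2 * g p * g1 p) := hg1.mul_left
  have sA1 : HasCompactSupport (fun p : ℝ × ℝ => 2 * g p * g1 p * (ψ p * (starRingEnd ℂ) (ψ1 p)).re) := sA1'.mul_right
  have sB1 : HasCompactSupport (fun p : ℝ × ℝ => g p ^ 2 * (‖ψ1 p‖ ^ 2 + (ψ p * (starRingEnd ℂ) (ψ11 p)).re)) := hgg.mul_right
  have sGG1 : HasCompactSupport (fun p : ℝ × ℝ => 2 * g p * g1 p * (ψ p * (starRingEnd ℂ) (ψ1 p)).re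
      + g p ^ 2 * (‖ψ1 p‖ ^ 2 + (ψ p * (starRingEnd ℂ) (ψ11 p)).re)) := sA1.add sB1
  have dG1 : ∀ t r : ℝ, HasDerivAt (fun s : ℝ => g (s, r) ^ 2 * (ψ (s, r) * (starRingEnd ℂ) (ψ1 (s, r))).re)
      (2 * g (t, r) * g1 (t, r) * (ψ (t, r) * (starRingEnd ℂ) (ψ1 (t, r))).re + g (t, r) ^ 2 * (‖ψ1 (t, r)‖ ^ 2 + (ψ (t, r) * (starRingEnd ℂ) (ψ11 (t, r))).re)) t := by
    intro t r
    refine (((dg1 t r).pow 2).mul (deriv_inner_pt (u := fun s => ψ (s, r))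
        (u1 := fun s => ψ1 (s, r)) (u11 := fun s => ψ11 (s, r)) (d1 t r) (d11 t r))).congr_deriv ?_
    simp
  have bc0 : ∀ r : ℝ, g (0, r) ^ 2 * (ψ (0, r) * (starRingEnd ℂ) (ψ1 (0, r))).re = 0 := by
    intro r; rw [bc r]; simp
  have i1 := cc_int cGG1 sGG1
  refine ⟨i1, ?_⟩
  exact int_d1 cG1 cGG1 sG1 sGG1 dG1 bc0

lemma en2 (cg : Continuous g) (cg2 : Continuous g2)
    (hg : HasCompactSupport g) (hg2 : HasCompactSupport g2)
    (dg2 : ∀ t r, HasDerivAt (fun s => g (t, s)) (g2 (t, r)) r)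
    (cψ : Continuous ψ) (cψ2 : Continuous ψ2) (cψ22 : Continuous ψ22)
    (d2 : ∀ t r, HasDerivAt (fun s => ψ (t, s)) (ψ2 (t, r)) r)
    (d22 : ∀ t r, HasDerivAt (fun s => ψ2 (t, s)) (ψ22 (t, r)) r) :
    IntegrableOn (fun p : ℝ × ℝ => 2 * g p * g2 p * (ψ p * (starRingEnd ℂ) (ψ2 p)).re
      + g p ^ 2 * (‖ψ2 p‖ ^ 2 + (ψ p * (starRingEnd ℂ) (ψ22 p)).re)) halfPlane ∧
    ∫ p in halfPlane, (2 * g p * g2 p * (ψ p * (starRingEnd ℂ) (ψ2 p)).re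
      + g p ^ 2 * (‖ψ2 p‖ ^ 2 + (ψ p * (starRingEnd ℂ) (ψ22 p)).re)) = 0 := by
  have c2 := ct_inner cψ cψ2
  have c22 := ct_inner cψ cψ22
  have hgg : HasCompactSupport (fun p => g p ^ 2) := hg.comp_left (g := fun z : ℝ => z ^ 2) (by simp)
  have cG2 : Continuous (fun p : ℝ × ℝ => g p ^ 2 * (ψ p * (starRingEnd ℂ) (ψ2 p)).re) := by fun_prop
  have cA2 : Continuous (fun p : ℝ × ℝ => 2 * g p * g2 p * (ψ p * (starRingEnd ℂ) (ψ2 p)).re) := by fun_prop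
  have cB2 : Continuous (fun p : ℝ × ℝ => g p ^ 2 * (‖ψ2 p‖ ^ 2 + (ψ p * (starRingEnd ℂ) (ψ22 p)).re)) := by fun_prop
  have cGG2 : Continuous (fun p : ℝ × ℝ => 2 * g p * g2 p * (ψ p * (starRingEnd ℂ) (ψ2 p)).re
      + g p ^ 2 * (‖ψ2 p‖ ^ 2 + (ψ p * (starRingEnd ℂ) (ψ22 p)).re)) := cA2.add cB2
  have sG2 : HasCompactSupport (fun p : ℝ × ℝ => g p ^ 2 * (ψ p * (starRingEnd ℂ) (ψ2 p)).re) := hgg.mul_right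
  have sA2' : HasCompactSupport (fun p : ℝ × ℝ => 2 * g p * g2 p) := hg2.mul_left
  have sA2 : HasCompactSupport (fun p : ℝ × ℝ => 2 * g p * g2 p * (ψ p * (starRingEnd ℂ) (ψ2 p)).re) := sA2'.mul_right
  have sB2 : HasCompactSupport (fun p : ℝ × ℝ => g p ^ 2 * (‖ψ2 p‖ ^ 2 + (ψ p * (starRingEnd ℂ) (ψ22 p)).re)) := hgg.mul_right
  have sGG2 : HasCompactSupport (fun p : ℝ × ℝ => 2 * g p * g2 p * (ψ p * (starRingEnd ℂ) (ψ2 p)).re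
      + g p ^ 2 * (‖ψ2 p‖ ^ 2 + (ψ p * (starRingEnd ℂ) (ψ22 p)).re)) := sA2.add sB2
  have dG2 : ∀ t r : ℝ, HasDerivAt (fun s : ℝ => g (t, s) ^ 2 * (ψ (t, s) * (starRingEnd ℂ) (ψ2 (t, s))).re)
      (2 * g (t, r) * g2 (t, r) * (ψ (t, r) * (starRingEnd ℂ) (ψ2 (t, r))).re + g (t, r) ^ 2 * (‖ψ2 (t, r)‖ ^ 2 + (ψ (t, r) * (starRingEnd ℂ) (ψ22 (t, r))).re)) r := by
    intro t r
    refine (((dg2 t r).pow 2).mul (deriv_inner_pt (u := fun s => ψ (t, s))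
        (u1 := fun s => ψ2 (t, s)) (u11 := fun s => ψ22 (t, s)) (d2 t r) (d22 t r))).congr_deriv ?_
    simp
  have i1 := cc_int cGG2 sGG2
  refine ⟨i1, ?_⟩
  exact int_d2 cG2 cGG2 sG2 sGG2 dG2

lemma energy_id (cg : Continuous g) (cg1 : Continuous g1) (cg2 : Continuous g2)
    (hg : HasCompactSupport g) (hg1 : HasCompactSupport g1) (hg2 : HasCompactSupport g2)
    (dg1 : ∀ t r, HasDerivAt (fun s => g (s, r)) (g1 (t, r)) t)
    (dg2 : ∀ t r, HasDerivAt (fun s => g (t, s)) (g2 (t, r)) r)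
    (cψ : Continuous ψ) (cψ1 : Continuous ψ1) (cψ2 : Continuous ψ2) (cψ11 : Continuous ψ11)
    (cψ22 : Continuous ψ22) (cV : Continuous V)
    (d1 : ∀ t r, HasDerivAt (fun s => ψ (s, r)) (ψ1 (t, r)) t)
    (d2 : ∀ t r, HasDerivAt (fun s => ψ (t, s)) (ψ2 (t, r)) r)
    (d11 : ∀ t r, HasDerivAt (fun s => ψ1 (s, r)) (ψ11 (t, r)) t)
    (d22 : ∀ t r, HasDerivAt (fun s => ψ2 (t, s)) (ψ22 (t, r)) r)
    (pde : ∀ p ∈ halfPlane, -ψ11 p - (k : ℂ) * ψ22 p + (V p : ℂ) * ψ p = (l : ℂ) * ψ p)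
    (bc : ∀ r, ψ1 (0, r) = 0) :
    ∫ p in halfPlane, ((‖(g1 p : ℂ) * ψ p + g p * ψ1 p‖ ^ 2 + V p * ‖(g p : ℂ) * ψ p‖ ^ 2)
        + k * ‖(g2 p : ℂ) * ψ p + g p * ψ2 p‖ ^ 2) =
      l * (∫ p in halfPlane, ‖(g p : ℂ) * ψ p‖ ^ 2)
        + ∫ p in halfPlane, (g1 p ^ 2 + k * g2 p ^ 2) * ‖ψ p‖ ^ 2 := by
  obtain ⟨i1, e1⟩ := en1 cg cg1 hg hg1 dg1 cψ cψ1 cψ11 d1 d11 bc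
  obtain ⟨i2, e2⟩ := en2 cg cg2 hg hg2 dg2 cψ cψ2 cψ22 d2 d22
  have n1 : ∀ p, ‖(g p : ℂ) * ψ p‖ ^ 2 = g p ^ 2 * ‖ψ p‖ ^ 2 := fun p => by
    rw [norm_mul, mul_pow, Complex.norm_real, Real.norm_eq_abs, sq_abs]
  simp only [n1, alg_pt]
  have hgg : HasCompactSupport (fun p => g p ^ 2) := hg.comp_left (g := fun z : ℝ => z ^ 2) (by simp)
  have hgg1 : HasCompactSupport (fun p => g1 p ^ 2) := hg1.comp_left (g := fun z : ℝ => z ^ 2) (by simp)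
  have hgg2 : HasCompactSupport (fun p => g2 p ^ 2) := hg2.comp_left (g := fun z : ℝ => z ^ 2) (by simp)
  have s3 : HasCompactSupport (fun p => k * g2 p ^ 2) := hgg2.mul_left
  have s33 : HasCompactSupport (fun p => g1 p ^ 2 + k * g2 p ^ 2) := hgg1.add s3
  have s34 : HasCompactSupport (fun p => (g1 p ^ 2 + k * g2 p ^ 2) * ‖ψ p‖ ^ 2) := s33.mul_right
  have s35 : HasCompactSupport (fun p => g p ^ 2 * ‖ψ p‖ ^ 2) := hgg.mul_right
  have i3 := cc_int (f := fun p => g p ^ 2 * ‖ψ p‖ ^ 2) (by fun_prop) s35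
  have i4 := cc_int (f := fun p => (g1 p ^ 2 + k * g2 p ^ 2) * ‖ψ p‖ ^ 2) (by fun_prop)
    s34
  have hmeas : MeasurableSet halfPlane := measurableSet_Ioi.prod MeasurableSet.univ
  have : ∫ p in halfPlane, (((2 * g p * g1 p * (ψ p * (starRingEnd ℂ) (ψ1 p)).re
        + g p ^ 2 * ‖ψ1 p‖ ^ 2 + g1 p ^ 2 * ‖ψ p‖ ^ 2) + V p * (g p ^ 2 * ‖ψ p‖ ^ 2))
        + k * (2 * g p * g2 p * (ψ p * (starRingEnd ℂ) (ψ2 p)).re + g p ^ 2 * ‖ψ2 p‖ ^ 2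
          + g2 p ^ 2 * ‖ψ p‖ ^ 2)) =
      ∫ p in halfPlane, ((l * (g p ^ 2 * ‖ψ p‖ ^ 2) + (g1 p ^ 2 + k * g2 p ^ 2) * ‖ψ p‖ ^ 2)
        + ((2 * g p * g1 p * (ψ p * (starRingEnd ℂ) (ψ1 p)).re
      + g p ^ 2 * (‖ψ1 p‖ ^ 2 + (ψ p * (starRingEnd ℂ) (ψ11 p)).re))
        + k * (2 * g p * g2 p * (ψ p * (starRingEnd ℂ) (ψ2 p)).re
      + g p ^ 2 * (‖ψ2 p‖ ^ 2 + (ψ p * (starRingEnd ℂ) (ψ22 p)).re)))) := by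
    refine setIntegral_congr_fun hmeas fun p hp => ?_
    have := alg_pde (pde p hp)
    linear_combination (-g p ^ 2) * this
  rw [this]
  have j1 : IntegrableOn (fun p => l * (g p ^ 2 * ‖ψ p‖ ^ 2) + (g1 p ^ 2 + k * g2 p ^ 2) * ‖ψ p‖ ^ 2)
    halfPlane := (i3.const_mul l).add i4
  have j2 : IntegrableOn (fun p => (2 * g p * g1 p * (ψ p * (starRingEnd ℂ) (ψ1 p)).re
      + g p ^ 2 * (‖ψ1 p‖ ^ 2 + (ψ p * (starRingEnd ℂ) (ψ11 p)).re))
        + k * (2 * g p * g2 p * (ψ p * (starRingEnd ℂ) (ψ2 p)).re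
      + g p ^ 2 * (‖ψ2 p‖ ^ 2 + (ψ p * (starRingEnd ℂ) (ψ22 p)).re))) halfPlane :=
    i1.add (i2.const_mul k)
  rw [integral_add j1 j2, integral_add (i3.const_mul l) i4, integral_add i1 (i2.const_mul k),
    integral_const_mul, integral_const_mul, e1, e2]
  simp
end energy


structure Cut (g g1 g2 : ℝ × ℝ → ℝ) : Prop where
  cg : Continuous g
  cg1 : Continuous g1
  cg2 : Continuous g2
  hg : HasCompactSupport g
  hg1 : HasCompactSupport g1
  hg2 : HasCompactSupport g2
  dg1 : ∀ t r, HasDerivAt (fun s => g (s, r)) (g1 (t, r)) t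
  dg2 : ∀ t r, HasDerivAt (fun s => g (t, s)) (g2 (t, r)) r

structure Eig (k l : ℝ) (σ : ℝ → ℝ) (ψ ψ1 ψ2 ψ11 ψ22 : ℝ × ℝ → ℂ) : Prop where
  cσ : Continuous σ
  cψ : Continuous ψ
  cψ1 : Continuous ψ1
  cψ2 : Continuous ψ2
  cψ11 : Continuous ψ11
  cψ22 : Continuous ψ22
  d1 : ∀ t r, HasDerivAt (fun s => ψ (s, r)) (ψ1 (t, r)) t
  d2 : ∀ t r, HasDerivAt (fun s => ψ (t, s)) (ψ2 (t, r)) r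
  d11 : ∀ t r, HasDerivAt (fun s => ψ1 (s, r)) (ψ11 (t, r)) t
  d22 : ∀ t r, HasDerivAt (fun s => ψ2 (t, s)) (ψ22 (t, r)) r
  pde : ∀ p ∈ halfPlane, -ψ11 p - (k : ℂ) * ψ22 p + (((p.1 + σ p.2) ^ 2 : ℝ) : ℂ) * ψ p = (l : ℂ) * ψ p
  bc : ∀ r, ψ1 (0, r) = 0

section core
variable {g g1 g2 : ℝ × ℝ → ℝ} {ψ ψ1 ψ2 ψ11 ψ22 : ℝ × ℝ → ℂ} {σ : ℝ → ℝ} {k l : ℝ}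

lemma cut_phi (hc : Cut g g1 g2) (he : Eig k l σ ψ ψ1 ψ2 ψ11 ψ22) :
    Continuous (fun p => (g p : ℂ) * ψ p) ∧ Continuous (fun p => (g1 p : ℂ) * ψ p + g p * ψ1 p) ∧
    Continuous (fun p => (g2 p : ℂ) * ψ p + g p * ψ2 p) ∧
    HasCompactSupport (fun p => (g p : ℂ) * ψ p) ∧
    HasCompactSupport (fun p => (g1 p : ℂ) * ψ p + g p * ψ1 p) ∧
    HasCompactSupport (fun p => (g2 p : ℂ) * ψ p + g p * ψ2 p) := by
  have a0 : HasCompactSupport (fun p => (g p : ℂ)) := hc.hg.comp_left (g := fun z : ℝ => (z : ℂ)) (by simp)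
  have a1 : HasCompactSupport (fun p => (g1 p : ℂ)) := hc.hg1.comp_left (g := fun z : ℝ => (z : ℂ)) (by simp)
  have a2 : HasCompactSupport (fun p => (g2 p : ℂ)) := hc.hg2.comp_left (g := fun z : ℝ => (z : ℂ)) (by simp)
  have b0 : HasCompactSupport (fun p => (g p : ℂ) * ψ p) := a0.mul_right
  have b1 : HasCompactSupport (fun p => (g p : ℂ) * ψ1 p) := a0.mul_right
  have b2 : HasCompactSupport (fun p => (g p : ℂ) * ψ2 p) := a0.mul_right
  have b3 : HasCompactSupport (fun p => (g1 p : ℂ) * ψ p) := a1.mul_right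
  have b4 : HasCompactSupport (fun p => (g2 p : ℂ) * ψ p) := a2.mul_right
  have c0 := Complex.continuous_ofReal.comp hc.cg
  have c1 := Complex.continuous_ofReal.comp hc.cg1
  have c2 := Complex.continuous_ofReal.comp hc.cg2
  exact ⟨c0.mul he.cψ, (c1.mul he.cψ).add (c0.mul he.cψ1), (c2.mul he.cψ).add (c0.mul he.cψ2),
    b0, b3.add b1, b4.add b2⟩

lemma w_int {φ : ℝ × ℝ → ℂ} (cφ : Continuous φ) (hφ : HasCompactSupport φ) {w : ℝ × ℝ → ℝ}
    (cw : Continuous w) : IntegrableOn (fun p => w p * ‖φ p‖ ^ 2) halfPlane := by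
  have s : HasCompactSupport (fun p => w p * ‖φ p‖ ^ 2) := (cs_normSq hφ).mul_left
  have c : Continuous (fun p => w p * ‖φ p‖ ^ 2) := by fun_prop
  exact cc_int c s

lemma n_int {φ : ℝ × ℝ → ℂ} (cφ : Continuous φ) (hφ : HasCompactSupport φ) :
    IntegrableOn (fun p => ‖φ p‖ ^ 2) halfPlane := by
  have c : Continuous (fun p => ‖φ p‖ ^ 2) := by fun_prop
  exact cc_int c (cs_normSq hφ)

lemma D_int (hc : Cut g g1 g2) (cψ : Continuous ψ) (k : ℝ) :
    IntegrableOn (fun p => (g1 p ^ 2 + k * g2 p ^ 2) * ‖ψ p‖ ^ 2) halfPlane := by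
  have hgg1 : HasCompactSupport (fun p => g1 p ^ 2) := hc.hg1.comp_left (g := fun z : ℝ => z ^ 2) (by simp)
  have hgg2 : HasCompactSupport (fun p => g2 p ^ 2) := hc.hg2.comp_left (g := fun z : ℝ => z ^ 2) (by simp)
  have s3 : HasCompactSupport (fun p => k * g2 p ^ 2) := hgg2.mul_left
  have s33 : HasCompactSupport (fun p => g1 p ^ 2 + k * g2 p ^ 2) := hgg1.add s3
  have s34 : HasCompactSupport (fun p => (g1 p ^ 2 + k * g2 p ^ 2) * ‖ψ p‖ ^ 2) := s33.mul_right
  have c1 := hc.cg1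
  have c2 := hc.cg2
  have c : Continuous (fun p => (g1 p ^ 2 + k * g2 p ^ 2) * ‖ψ p‖ ^ 2) := by fun_prop
  exact cc_int c s34

lemma C_both (hc : Cut g g1 g2) (he : Eig k l σ ψ ψ1 ψ2 ψ11 ψ22) :
    (∫ p in halfPlane, (‖(g1 p : ℂ) * ψ p + g p * ψ1 p‖ ^ 2 + (p.1 + σ p.2) ^ 2 * ‖(g p : ℂ) * ψ p‖ ^ 2))
        + k * (∫ p in halfPlane, ‖(g2 p : ℂ) * ψ p + g p * ψ2 p‖ ^ 2) =
      l * (∫ p in halfPlane, ‖(g p : ℂ) * ψ p‖ ^ 2)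
        + ∫ p in halfPlane, (g1 p ^ 2 + k * g2 p ^ 2) * ‖ψ p‖ ^ 2 := by
  obtain ⟨c0, c1, c2, s0, s1, s2⟩ := cut_phi hc he
  have cσ := he.cσ
  have cV : Continuous (fun p : ℝ × ℝ => (p.1 + σ p.2) ^ 2) := by fun_prop
  rw [← energy_id hc.cg hc.cg1 hc.cg2 hc.hg hc.hg1 hc.hg2 hc.dg1 hc.dg2 he.cψ he.cψ1 he.cψ2
    he.cψ11 he.cψ22 cV he.d1 he.d2 he.d11 he.d22 he.pde he.bc]
  have i1 := n_int c1 s1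
  have i2 := n_int c2 s2
  have i0 := w_int c0 s0 cV
  have i3 : IntegrableOn (fun p => ‖(g1 p : ℂ) * ψ p + g p * ψ1 p‖ ^ 2
    + (p.1 + σ p.2) ^ 2 * ‖(g p : ℂ) * ψ p‖ ^ 2) halfPlane := i1.add i0
  rw [integral_add i3 (i2.const_mul k), integral_const_mul]

lemma C1 (hc : Cut g g1 g2) (he : Eig k l σ ψ ψ1 ψ2 ψ11 ψ22) {y c ω : ℝ} (hk : 0 < k)
    (hl : l ≤ y ^ 2 + ω * k)
    (hP : ∀ σ : ℝ, ∃ P P' : ℝ → ℝ, (∀ x, HasDerivAt P (P' x) x) ∧ Continuous P' ∧ 0 ≤ P σ ∧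
      ∀ x, y ^ 2 + c * min 1 ((σ + y) ^ 2) ≤ P' x + x ^ 2 - P x ^ 2) :
    (∫ p in halfPlane, ‖(g2 p : ℂ) * ψ p + g p * ψ2 p‖ ^ 2) +
      (∫ p in halfPlane, (c * min 1 ((σ p.2 + y) ^ 2) / k) * ‖(g p : ℂ) * ψ p‖ ^ 2) ≤
      ω * (∫ p in halfPlane, ‖(g p : ℂ) * ψ p‖ ^ 2)
        + k⁻¹ * ∫ p in halfPlane, (g1 p ^ 2 + k * g2 p ^ 2) * ‖ψ p‖ ^ 2 := by
  obtain ⟨c0, c1, c2, s0, s1, s2⟩ := cut_phi hc he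
  have cσ := he.cσ
  have d : ∀ t r, HasDerivAt (fun s : ℝ => (g (s, r) : ℂ) * ψ (s, r))
      ((g1 (t, r) : ℂ) * ψ (t, r) + g (t, r) * ψ1 (t, r)) t := fun t r =>
    (hc.dg1 t r).ofReal_comp.mul (he.d1 t r)
  have h1 := fiber_ineq hP cσ c0 c1 s0 s1 d
  have h2 := C_both hc he
  have cU : Continuous (fun p : ℝ × ℝ => c * min 1 ((σ p.2 + y) ^ 2) / k) := by fun_prop
  have i0 := n_int c0 s0
  have iU := w_int c0 s0 cU
  have h3 : ∫ p in halfPlane, (y ^ 2 + c * min 1 ((σ p.2 + y) ^ 2)) * ‖(g p : ℂ) * ψ p‖ ^ 2 =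
      y ^ 2 * (∫ p in halfPlane, ‖(g p : ℂ) * ψ p‖ ^ 2) +
      k * (∫ p in halfPlane, (c * min 1 ((σ p.2 + y) ^ 2) / k) * ‖(g p : ℂ) * ψ p‖ ^ 2) := by
    rw [← integral_const_mul, ← integral_const_mul, ← integral_add (i0.const_mul _) (iU.const_mul _)]
    congr 1
    funext p
    field_simp
  rw [h3] at h1
  have h0 : 0 ≤ ∫ p in halfPlane, ‖(g p : ℂ) * ψ p‖ ^ 2 := integral_nonneg fun p => by positivity
  generalize (∫ p in halfPlane, ‖(g p : ℂ) * ψ p‖ ^ 2) = I0 at *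
  generalize (∫ p in halfPlane, (c * min 1 ((σ p.2 + y) ^ 2) / k) * ‖(g p : ℂ) * ψ p‖ ^ 2) = IU at *
  generalize (∫ p in halfPlane, ‖(g2 p : ℂ) * ψ p + g p * ψ2 p‖ ^ 2) = I2 at *
  generalize (∫ p in halfPlane, (g1 p ^ 2 + k * g2 p ^ 2) * ‖ψ p‖ ^ 2) = ID at *
  have h4 : k * (I2 + IU) ≤ k * (ω * I0 + k⁻¹ * ID) := by
    have : k * (k⁻¹ * ID) = ID := by field_simp
    nlinarith [mul_le_mul_of_nonneg_right hl h0]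
  exact le_of_mul_le_mul_left h4 hk

lemma C2 (hc : Cut g g1 g2) (he : Eig k l σ ψ ψ1 ψ2 ψ11 ψ22) :
    (∫ p in halfPlane, ‖(g1 p : ℂ) * ψ p + g p * ψ1 p‖ ^ 2)
        + k * (∫ p in halfPlane, ‖(g2 p : ℂ) * ψ p + g p * ψ2 p‖ ^ 2) ≤
      l * (∫ p in halfPlane, ‖(g p : ℂ) * ψ p‖ ^ 2)
        + ∫ p in halfPlane, (g1 p ^ 2 + k * g2 p ^ 2) * ‖ψ p‖ ^ 2 := by
  obtain ⟨c0, c1, c2, s0, s1, s2⟩ := cut_phi hc he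
  have cσ := he.cσ
  have cV : Continuous (fun p : ℝ × ℝ => (p.1 + σ p.2) ^ 2) := by fun_prop
  have i1 := n_int c1 s1
  have i0 := w_int c0 s0 cV
  rw [← C_both hc he, integral_add i1 i0]
  have h0 : 0 ≤ ∫ p in halfPlane, (p.1 + σ p.2) ^ 2 * ‖(g p : ℂ) * ψ p‖ ^ 2 :=
    integral_nonneg fun p => by positivity
  linarith

/-- Main cut-off inequality. -/
lemma key (hc : Cut g g1 g2) (he : Eig k l σ ψ ψ1 ψ2 ψ11 ψ22) {y c ω R Kb : ℝ} (hk : 0 < k)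
    (hω : 0 < ω) (hc0 : 0 < c)
    (hl : l ≤ y ^ 2 + ω * k)
    (hP : ∀ σ : ℝ, ∃ P P' : ℝ → ℝ, (∀ x, HasDerivAt P (P' x) x) ∧ Continuous P' ∧ 0 ≤ P σ ∧
      ∀ x, y ^ 2 + c * min 1 ((σ + y) ^ 2) ≤ P' x + x ^ 2 - P x ^ 2)
    (hU : (∃ W W' : ℝ → ℝ, (∀ x, HasDerivAt W (W' x) x) ∧ Continuous W' ∧
        ∀ x, W x ^ 2 ≤ c * min 1 ((σ x + y) ^ 2) / k ∧
          2 * (ω + 1) ≤ c * min 1 ((σ x + y) ^ 2) / k + W' x) ∨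
      ∀ x, R ≤ |x| → ω + 1 ≤ c * min 1 ((σ x + y) ^ 2) / k)
    (hKb : 0 ≤ Kb) (hgR : ∀ p, |p.2| < R → g p ^ 2 ≤ Kb)
    (iψ : IntegrableOn (fun p => ‖ψ p‖ ^ 2) halfPlane) :
    ∫ p in halfPlane, ‖(g p : ℂ) * ψ p‖ ^ 2 ≤
      k⁻¹ * (∫ p in halfPlane, (g1 p ^ 2 + k * g2 p ^ 2) * ‖ψ p‖ ^ 2)
        + (ω + 1) * Kb * ∫ p in halfPlane, ‖ψ p‖ ^ 2 := by
  obtain ⟨c0, c1, c2, s0, s1, s2⟩ := cut_phi hc he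
  have cσ := he.cσ
  have h1 := C1 hc he hk hl hP
  have cU : Continuous (fun p : ℝ × ℝ => c * min 1 ((σ p.2 + y) ^ 2) / k) := by fun_prop
  have i0 := n_int c0 s0
  have i2 := n_int c2 s2
  have iU := w_int c0 s0 cU
  have hψ0 : 0 ≤ ∫ p in halfPlane, ‖ψ p‖ ^ 2 := integral_nonneg fun p => by positivity
  have h20 : 0 ≤ ∫ p in halfPlane, ‖(g2 p : ℂ) * ψ p + g p * ψ2 p‖ ^ 2 :=
    integral_nonneg fun p => by positivity
  rcases hU with ⟨W, W', dW, cW, hW⟩ | hU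
  · have d : ∀ t r, HasDerivAt (fun s : ℝ => (g (t, s) : ℂ) * ψ (t, s))
      ((g2 (t, r) : ℂ) * ψ (t, r) + g (t, r) * ψ2 (t, r)) r := fun t r =>
      (hc.dg2 t r).ofReal_comp.mul (he.d2 t r)
    have h2 := W_ineq dW cW c0 c2 s0 s2 d
    have cWc : Continuous W := continuous_iff_continuousAt.2 fun x => (dW x).continuousAt
    have cW2 : Continuous (fun p : ℝ × ℝ => W p.2 ^ 2) := by fun_prop
    have cW3 : Continuous (fun p : ℝ × ℝ => W' p.2) := by fun_prop
    have iW2 := w_int c0 s0 cW2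
    have iW3 := w_int c0 s0 cW3
    rw [integral_add i2 iW2] at h2
    have h3 : ∫ p in halfPlane, W p.2 ^ 2 * ‖(g p : ℂ) * ψ p‖ ^ 2 ≤
        ∫ p in halfPlane, (c * min 1 ((σ p.2 + y) ^ 2) / k) * ‖(g p : ℂ) * ψ p‖ ^ 2 :=
      setIntegral_mono iW2 iU fun p => mul_le_mul_of_nonneg_right (hW p.2).1 (by positivity)
    have h4 : ∫ p in halfPlane, (2 * (ω + 1)) * ‖(g p : ℂ) * ψ p‖ ^ 2 ≤
        ∫ p in halfPlane, ((c * min 1 ((σ p.2 + y) ^ 2) / k) * ‖(g p : ℂ) * ψ p‖ ^ 2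
          + W' p.2 * ‖(g p : ℂ) * ψ p‖ ^ 2) :=
      setIntegral_mono (i0.const_mul _) (iU.add iW3) fun p => by
        have := mul_le_mul_of_nonneg_right (hW p.2).2 (by positivity : 0 ≤ ‖(g p : ℂ) * ψ p‖ ^ 2)
        simp only
        linarith
    rw [integral_add iU iW3, integral_const_mul] at h4
    have : 0 ≤ (ω + 1) * Kb * ∫ p in halfPlane, ‖ψ p‖ ^ 2 := by positivity
    linarith
  · have h4 : ∫ p in halfPlane, (ω + 1) * ‖(g p : ℂ) * ψ p‖ ^ 2 ≤
        ∫ p in halfPlane, ((c * min 1 ((σ p.2 + y) ^ 2) / k) * ‖(g p : ℂ) * ψ p‖ ^ 2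
          + (ω + 1) * Kb * ‖ψ p‖ ^ 2) :=
      setIntegral_mono (i0.const_mul _) (iU.add (iψ.const_mul _)) fun p => by
        simp only
        have n1 : ‖(g p : ℂ) * ψ p‖ ^ 2 = g p ^ 2 * ‖ψ p‖ ^ 2 := by
          rw [norm_mul, mul_pow, Complex.norm_real, Real.norm_eq_abs, sq_abs]
        rw [n1]
        have hn : 0 ≤ ‖ψ p‖ ^ 2 := by positivity
        rcases le_or_gt R |p.2| with h | h
        · have := mul_le_mul_of_nonneg_right (hU p.2 h) (by positivity : 0 ≤ g p ^ 2 * ‖ψ p‖ ^ 2)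
          have : 0 ≤ (ω + 1) * Kb * ‖ψ p‖ ^ 2 := by positivity
          linarith
        · have h5 := mul_le_mul_of_nonneg_left (mul_le_mul_of_nonneg_right (hgR p h) hn)
            (by positivity : 0 ≤ ω + 1)
          have : 0 ≤ c * min 1 ((σ p.2 + y) ^ 2) / k * (g p ^ 2 * ‖ψ p‖ ^ 2) := by
            have : 0 ≤ min 1 ((σ p.2 + y) ^ 2) := le_min zero_le_one (sq_nonneg _)
            positivity
          linarith
    rw [integral_add iU (iψ.const_mul _), integral_const_mul, integral_const_mul] at h4
    linarith
end core


lemma abs_arctan_le (x : ℝ) : |arctan x| ≤ |x| := by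
  have h : ∀ z : ℝ, 0 ≤ z → arctan z ≤ z := by
    intro z hz
    have := Real.le_tan (arctan_nonneg.2 hz) (arctan_lt_pi_div_two z)
    rwa [tan_arctan] at this
  rcases le_total 0 x with hx | hx
  · rw [abs_of_nonneg (arctan_nonneg.2 hx), abs_of_nonneg hx]; exact h x hx
  · have := h (-x) (by linarith)
    rw [arctan_neg] at this
    have h2 : arctan x ≤ 0 := arctan_le_zero.2 hx
    rw [abs_of_nonpos h2, abs_of_nonpos hx]; exact this

lemma abs_arctan_le_two (x : ℝ) : |arctan x| ≤ 2 := by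
  have := Real.pi_lt_four
  rw [abs_le]
  constructor <;> linarith [arctan_lt_pi_div_two x, neg_pi_div_two_lt_arctan x]

lemma mul_arctan_nonneg (x : ℝ) : 0 ≤ x * arctan x := by
  rcases le_total 0 x with hx | hx
  · exact mul_nonneg hx (arctan_nonneg.2 hx)
  · exact mul_nonneg_of_nonpos_of_nonpos hx (arctan_le_zero.2 hx)

lemma mul_arctan_ge {x : ℝ} (h : 1 ≤ |x|) : |x| / 2 ≤ x * arctan x := by
  have key : ∀ z : ℝ, 1 ≤ z → z / 2 ≤ z * arctan z := by
    intro z hz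
    have h1 : arctan 1 ≤ arctan z := arctan_strictMono.monotone hz
    rw [arctan_one] at h1
    have := Real.pi_gt_three
    nlinarith
  rcases le_total 0 x with hx | hx
  · rw [abs_of_nonneg hx] at *; exact key x h
  · rw [abs_of_nonpos hx] at *
    have := key _ h
    rw [arctan_neg] at this; linarith

set_option maxHeartbeats 1600000 in
lemma scalar_cases {c ω : ℝ} (hc : 0 < c) (hc1 : c ≤ 1) (hω : 0 < ω) :
    ∃ R H : ℝ, 0 < H ∧ H ≤ 1 ∧ ∀ h : ℝ, 0 < h → h < H → ∀ δ : ℝ,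
      (∃ W W' : ℝ → ℝ, (∀ x, HasDerivAt W (W' x) x) ∧ Continuous W' ∧
        ∀ x, W x ^ 2 ≤ c * min 1 ((h * (δ + x ^ 2 / 2)) ^ 2) / h ^ 2 ∧
          2 * (ω + 1) ≤ c * min 1 ((h * (δ + x ^ 2 / 2)) ^ 2) / h ^ 2 + W' x) ∨
      ∀ x, R ≤ |x| → ω + 1 ≤ c * min 1 ((h * (δ + x ^ 2 / 2)) ^ 2) / h ^ 2 := by
  set T := 2 * (ω + 1) + 2 with hT
  have hTp : 1 < T := by linarith
  set M := T / c with hM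
  have hMT : T ≤ M := by rw [hM, le_div_iff₀ hc]; nlinarith
  have hcM : T ≤ c * M ^ 2 := by
    have : c * M = T := by rw [hM]; field_simp
    nlinarith
  set s := c / 4 with hs
  have hsp : 0 < s := by positivity
  set L := 2 * (1 + M ^ 2) * (2 * (ω + 1) / s + 2) with hL
  have hLp : 1 ≤ L := by
    have : 0 < 2 * (ω + 1) / s := by positivity
    nlinarith [sq_nonneg M]
  set A := M + L ^ 2 with hA
  have hUeq : ∀ h x : ℝ, 0 < h → c * min 1 ((h * x) ^ 2) / h ^ 2 = c * min (1 / h ^ 2) (x ^ 2) := by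
    intro h x hh
    have hh2 : 0 < h ^ 2 := by positivity
    have : min 1 ((h * x) ^ 2) = h ^ 2 * min (1 / h ^ 2) (x ^ 2) := by
      rw [mul_min_of_nonneg _ _ hh2.le]
      congr 1
      · field_simp
      · ring
    rw [this]; field_simp
  have hbig : ∀ h x : ℝ, 0 < h → h < c / T → M ≤ |x| → T ≤ c * min (1 / h ^ 2) (x ^ 2) := by
    intro h x hh hhT hx
    rw [mul_min_of_nonneg _ _ hc.le]
    apply le_min
    · rw [lt_div_iff₀ (by linarith)] at hhT
      have h1 : h * T < 1 := by linarith
      have h2 : h < 1 := by nlinarith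
      rw [mul_one_div, le_div_iff₀ (by positivity)]
      nlinarith
    · refine hcM.trans (mul_le_mul_of_nonneg_left ?_ hc.le)
      rw [← sq_abs x]
      exact pow_le_pow_left₀ (by linarith) hx 2
  refine ⟨2 * (A + M) + 1, c / T, by positivity, ?_, ?_⟩
  · rw [div_le_one (by linarith)]; linarith
  intro h hh hhT δ
  have hh1 : h ≤ 1 := hhT.le.trans (by rw [div_le_one (by linarith)]; linarith)
  simp only [hUeq h _ hh]
  rcases lt_or_ge δ (-A) with hδ | hδ
  · left
    refine ⟨fun ρ => s * (arctan ρ * arctan (δ + ρ ^ 2 / 2)),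
      fun ρ => s * ((1 / (1 + ρ ^ 2)) * arctan (δ + ρ ^ 2 / 2) +
        arctan ρ * ((1 / (1 + (δ + ρ ^ 2 / 2) ^ 2)) * ρ)), ?_, ?_, ?_⟩
    · intro ρ
      have h1 : HasDerivAt (fun ρ : ℝ => δ + ρ ^ 2 / 2) ρ ρ := by
        have := ((hasDerivAt_pow 2 ρ).div_const 2).const_add δ
        refine this.congr_deriv ?_
        simp
      exact ((hasDerivAt_arctan ρ).mul h1.arctan).const_mul s
    · have h1 : ∀ ρ : ℝ, 1 + ρ ^ 2 ≠ 0 := fun ρ => by positivity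
      have h2 : ∀ ρ : ℝ, 1 + (δ + ρ ^ 2 / 2) ^ 2 ≠ 0 := fun ρ => by positivity
      have hac := Real.continuous_arctan
      fun_prop (disch := first | exact h1 _ | exact h2 _)
    · intro ρ
      set x := δ + ρ ^ 2 / 2 with hx
      simp only
      have a1 := abs_arctan_le_two ρ
      have a2 := abs_arctan_le_two x
      have a3 := abs_arctan_le x
      have a1' : arctan ρ ^ 2 ≤ 4 := by
        rw [← sq_abs]; nlinarith [abs_nonneg (arctan ρ)]
      have a2' : arctan x ^ 2 ≤ 4 := by
        rw [← sq_abs]; nlinarith [abs_nonneg (arctan x)]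
      have a3' : arctan x ^ 2 ≤ x ^ 2 := sq_le_sq.2 a3
      constructor
      · rw [mul_min_of_nonneg _ _ hc.le]
        have e : (s * (arctan ρ * arctan x)) ^ 2 ≤ c ^ 2 / 4 * arctan x ^ 2 := by
          have : (s * (arctan ρ * arctan x)) ^ 2 = c ^ 2 / 16 * arctan x ^ 2 * arctan ρ ^ 2 := by
            rw [hs]; ring
          rw [this]
          have h0 : 0 ≤ c ^ 2 / 16 * arctan x ^ 2 := by positivity
          have := mul_le_mul_of_nonneg_left a1' h0
          linarith
        have hcc : c ^ 2 ≤ c := by nlinarith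
        apply le_min
        · refine e.trans ?_
          have : (1:ℝ) ≤ 1 / h ^ 2 := by
            rw [le_div_iff₀ (by positivity)]; nlinarith
          have t1 : c ^ 2 / 4 * arctan x ^ 2 ≤ c ^ 2 / 4 * 4 :=
            mul_le_mul_of_nonneg_left a2' (by positivity)
          have t2 : c * 1 ≤ c * (1 / h ^ 2) := mul_le_mul_of_nonneg_left this hc.le
          linarith
        · refine e.trans ?_
          have t1 : c ^ 2 / 4 * arctan x ^ 2 ≤ c * x ^ 2 :=
            mul_le_mul (by linarith) a3' (by positivity) hc.le
          exact t1
      · have p1 : -2 ≤ 1 / (1 + ρ ^ 2) * arctan x := by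
          have : |1 / (1 + ρ ^ 2) * arctan x| ≤ 2 := by
            rw [abs_mul, abs_of_pos (by positivity)]
            have : 1 / (1 + ρ ^ 2) ≤ 1 := by
              rw [div_le_one (by positivity)]; nlinarith [sq_nonneg ρ]
            have h0 : 0 < 1 / (1 + ρ ^ 2) := by positivity
            nlinarith [abs_nonneg (arctan x)]
          exact (abs_le.1 this).1
        have p2 : arctan ρ * (1 / (1 + x ^ 2) * ρ) = (ρ * arctan ρ) / (1 + x ^ 2) := by ring
        rw [p2]
        rcases le_or_gt M |x| with hMx | hMx
        · have b := hbig h x hh hhT hMx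
          have p3 : 0 ≤ (ρ * arctan ρ) / (1 + x ^ 2) :=
            div_nonneg (mul_arctan_nonneg ρ) (by positivity)
          have : -2 ≤ 1 / (1 + ρ ^ 2) * arctan x + (ρ * arctan ρ) / (1 + x ^ 2) := by linarith
          have hs1 : s ≤ 1 := by rw [hs]; linarith
          nlinarith
        · have hU0 : 0 ≤ c * min (1 / h ^ 2) (x ^ 2) := by
            have : 0 ≤ min (1 / h ^ 2) (x ^ 2) := le_min (by positivity) (sq_nonneg _)
            positivity
          have hρ : L ≤ |ρ| := by
            have : L ^ 2 ≤ ρ ^ 2 := by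
              have := (abs_lt.1 hMx).1
              nlinarith [sq_nonneg L]
            have := sq_le_sq.1 this
            rwa [abs_of_nonneg (by linarith)] at this
          have p4 := mul_arctan_ge (hLp.trans hρ)
          have hx2 : x ^ 2 ≤ M ^ 2 := by
            rw [← sq_abs x]; exact pow_le_pow_left₀ (abs_nonneg x) hMx.le 2
          have p5 : 2 * (ω + 1) / s + 2 ≤ (ρ * arctan ρ) / (1 + x ^ 2) := by
            rw [le_div_iff₀ (by positivity)]
            have q : 0 < 2 * (ω + 1) / s + 2 := by positivity
            nlinarith
          have p6 : 2 * (ω + 1) / s ≤ 1 / (1 + ρ ^ 2) * arctan x + (ρ * arctan ρ) / (1 + x ^ 2) := by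
            linarith
          rw [div_le_iff₀ hsp] at p6
          linarith
  · right
    intro x hx
    have hAM : 0 ≤ A + M := by rw [hA]; nlinarith [sq_nonneg L]
    have hx2 : 2 * (A + M) ≤ x ^ 2 := by
      rw [← sq_abs]; nlinarith
    have := hbig h (δ + x ^ 2 / 2) hh hhT (by
      rw [abs_of_nonneg] <;> linarith)
    linarith


structure Chi (χ χ' : ℝ → ℝ) (K : ℝ) : Prop where
  d : ∀ x, HasDerivAt χ (χ' x) x
  c' : Continuous χ'
  nn : ∀ x, 0 ≤ χ x
  le1 : ∀ x, χ x ≤ 1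
  one : ∀ x, |x| ≤ 1 → χ x = 1
  z : ∀ x, 2 < |x| → χ x = 0
  z' : ∀ x, 2 < |x| → χ' x = 0
  K0 : 0 ≤ K
  b : ∀ x, |χ' x| ≤ K

lemma chi_exists : ∃ χ χ' K, Chi χ χ' K := by
  let f : ContDiffBump (0:ℝ) := ⟨1, 2, by norm_num, by norm_num⟩
  have hf : ContDiff ℝ 1 f := f.contDiff
  have cd : Continuous (deriv f) := hf.continuous_deriv le_rfl
  have cs : HasCompactSupport (deriv f) := f.hasCompactSupport.deriv
  obtain ⟨K, hK⟩ := cd.bounded_above_of_compact_support cs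
  have z : ∀ x, 2 < |x| → x ∉ tsupport f := by
    intro x hx
    rw [f.tsupport_eq]
    simp only [Metric.mem_closedBall, Real.dist_eq, sub_zero, not_le]
    exact hx
  refine ⟨f, deriv f, K, ⟨fun x => (hf.differentiable (by norm_num) x).hasDerivAt, cd,
    fun x => f.nonneg, fun x => f.le_one, ?_, ?_, ?_, (norm_nonneg _).trans (hK 0), hK⟩⟩
  · intro x hx
    apply f.one_of_mem_closedBall
    simpa [Real.dist_eq] using hx
  · intro x hx
    exact image_eq_zero_of_notMem_tsupport (z x hx)
  · intro x hx
    by_contra h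
    exact z x hx (support_deriv_subset h)

def jb (x : ℝ) : ℝ := √(1 + x ^ 2)
lemma jb_sq (x : ℝ) : jb x ^ 2 = 1 + x ^ 2 := Real.sq_sqrt (by positivity)
lemma jb_ge (x : ℝ) : 1 ≤ jb x := by
  rw [jb, Real.one_le_sqrt]; nlinarith [sq_nonneg x]
lemma jb_cont : Continuous jb := by unfold jb; fun_prop
lemma jb_abs (x : ℝ) : |x| ≤ jb x := by
  rw [jb]; apply Real.abs_le_sqrt; linarith
lemma jb_le (x : ℝ) : jb x ≤ 1 + |x| := by
  rw [jb, Real.sqrt_le_left (by positivity)]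
  nlinarith [sq_abs x, abs_nonneg x]
lemma jb_deriv (x : ℝ) : HasDerivAt jb (x / jb x) x := by
  have h : HasDerivAt (fun x : ℝ => 1 + x ^ 2) (2 * x) x := by
    refine ((hasDerivAt_pow 2 x).const_add 1).congr_deriv ?_
    simp
  refine (h.sqrt (by positivity)).congr_deriv ?_
  rw [jb]; ring

section cutoff
variable {χ χ' : ℝ → ℝ} {K : ℝ}

def gF (χ : ℝ → ℝ) (h N : ℝ) (k : ℕ) (p : ℝ × ℝ) : ℝ :=
  χ (h / N * p.1) * (χ (1 / N * p.2) * jb p.2 ^ k)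
def gF1 (χ χ' : ℝ → ℝ) (h N : ℝ) (k : ℕ) (p : ℝ × ℝ) : ℝ :=
  χ' (h / N * p.1) * (h / N) * (χ (1 / N * p.2) * jb p.2 ^ k)
def gF2 (χ χ' : ℝ → ℝ) (h N : ℝ) (k : ℕ) (p : ℝ × ℝ) : ℝ :=
  χ (h / N * p.1) * (χ' (1 / N * p.2) * (1 / N) * jb p.2 ^ k +
    χ (1 / N * p.2) * (k * jb p.2 ^ (k - 1) * (p.2 / jb p.2)))

lemma gF_cut (hχ : Chi χ χ' K) {h N : ℝ} (hh : 0 < h) (hN : 1 ≤ N) (k : ℕ) :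
    Cut (gF χ h N k) (gF1 χ χ' h N k) (gF2 χ χ' h N k) := by
  have cχ : Continuous χ := continuous_iff_continuousAt.2 fun x => (hχ.d x).continuousAt
  have cχ' := hχ.c'
  have cj := jb_cont
  have j0 : ∀ x, jb x ≠ 0 := fun x => by have := jb_ge x; positivity
  have hN0 : 0 < N := by linarith
  have lin : ∀ a x : ℝ, HasDerivAt (fun x : ℝ => a * x) a x := fun a x => by
    simpa using (hasDerivAt_id x).const_mul a
  have dc : ∀ a x : ℝ, HasDerivAt (fun x : ℝ => χ (a * x)) (χ' (a * x) * a) x := fun a x =>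
    (hχ.d (a * x)).comp x (lin a x)
  have out : ∀ p : ℝ × ℝ, p ∉ Icc (-(2 * N / h)) (2 * N / h) ×ˢ Icc (-(2 * N)) (2 * N) →
      2 < |h / N * p.1| ∨ 2 < |1 / N * p.2| := by
    intro p hp
    by_contra hcon
    push Not at hcon
    apply hp
    obtain ⟨h1, h2⟩ := hcon
    rw [abs_mul, abs_of_pos (by positivity)] at h1 h2
    have h1' : |p.1| ≤ 2 * N / h := by
      rw [le_div_iff₀ hh]
      rw [div_mul_eq_mul_div, div_le_iff₀ hN0] at h1
      linarith
    have h2' : |p.2| ≤ 2 * N := by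
      rw [div_mul_eq_mul_div, div_le_iff₀ hN0] at h2
      linarith
    exact ⟨abs_le.1 h1', abs_le.1 h2'⟩
  have hK : IsCompact (Icc (-(2 * N / h)) (2 * N / h) ×ˢ Icc (-(2 * N)) (2 * N)) :=
    isCompact_Icc.prod isCompact_Icc
  refine ⟨?_, ?_, ?_, ?_, ?_, ?_, ?_, ?_⟩
  · unfold gF; fun_prop
  · unfold gF1; fun_prop
  · have : Continuous fun p : ℝ × ℝ => p.2 / jb p.2 :=
      continuous_snd.div (cj.comp continuous_snd) fun p => j0 p.2
    unfold gF2; fun_prop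
  · refine HasCompactSupport.intro hK fun p hp => ?_
    rcases out p hp with h1 | h1
    · simp [gF, hχ.z _ h1]
    · simp only [gF, hχ.z _ h1]; ring
  · refine HasCompactSupport.intro hK fun p hp => ?_
    rcases out p hp with h1 | h1
    · simp [gF1, hχ.z' _ h1]
    · simp only [gF1, hχ.z _ h1]; ring
  · refine HasCompactSupport.intro hK fun p hp => ?_
    rcases out p hp with h1 | h1
    · simp [gF2, hχ.z _ h1]
    · simp only [gF2, hχ.z _ h1, hχ.z' _ h1]; ring
  · intro t r
    exact (dc (h / N) t).mul_const (χ (1 / N * r) * jb r ^ k)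
  · intro t r
    have := ((dc (1 / N) r).mul ((jb_deriv r).pow k)).const_mul (χ (h / N * t))
    exact this

lemma gF_D (hχ : Chi χ χ' K) {h N : ℝ} (hh : 0 < h) (hN : 1 ≤ N) (k : ℕ) (p : ℝ × ℝ) :
    gF1 χ χ' h N k p ^ 2 + h ^ 2 * gF2 χ χ' h N k p ^ 2 ≤
      h ^ 2 * (((3 * K) ^ 2 + (3 * K + k) ^ 2) * (1 + p.2 ^ 2) ^ (k - 1)) := by
  have hN0 : 0 < N := by linarith
  have j1 := jb_ge p.2
  have j0 : 0 < jb p.2 := by linarith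
  have hK := hχ.K0
  -- basic: f vanishing outside 2N
  have base : ∀ f : ℝ → ℝ, (∀ x, 2 < |x| → f x = 0) → ∀ C, (∀ x, |f x| ≤ C) → 0 ≤ C →
      |f (1 / N * p.2) * (1 / N) * jb p.2 ^ k| ≤ 3 * C * jb p.2 ^ (k - 1) := by
    intro f hf C hC hC0
    rcases lt_or_ge 2 |1 / N * p.2| with h1 | h1
    · rw [hf _ h1]; simp; positivity
    · rw [abs_mul, abs_of_pos (by positivity)] at h1
      have h2' : |p.2| ≤ 2 * N := by
        rw [div_mul_eq_mul_div, div_le_iff₀ hN0] at h1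
        linarith
      have h3 : jb p.2 ≤ 3 * N := by linarith [jb_le p.2]
      have h4 : 1 / N * jb p.2 ^ k ≤ 3 * jb p.2 ^ (k - 1) := by
        have h5 : jb p.2 ^ k ≤ jb p.2 * jb p.2 ^ (k - 1) := by
          rw [← pow_succ']
          exact pow_le_pow_right₀ j1 (by omega)
        rw [div_mul_eq_mul_div, div_le_iff₀ hN0, one_mul]
        refine h5.trans ?_
        have := mul_le_mul_of_nonneg_right h3 (by positivity : 0 ≤ jb p.2 ^ (k - 1))
        linarith
      rw [mul_assoc, abs_mul, abs_of_nonneg (by positivity : 0 ≤ 1 / N * jb p.2 ^ k)]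
      calc _ ≤ C * (3 * jb p.2 ^ (k - 1)) := mul_le_mul (hC _) h4 (by positivity) hC0
        _ = _ := by ring
  have absχ : ∀ x, |χ x| ≤ 1 := fun x => by rw [abs_of_nonneg (hχ.nn x)]; exact hχ.le1 x
  have b1 := base χ hχ.z 1 absχ zero_le_one
  have b2 := base χ' hχ.z' K hχ.b hK
  set Y := jb p.2 ^ (k - 1) with hY
  have hY0 : 0 ≤ Y := by positivity
  have e1 : |gF1 χ χ' h N k p| ≤ h * (3 * K * Y) := by
    have : gF1 χ χ' h N k p = h * (χ' (h / N * p.1) * (χ (1 / N * p.2) * (1 / N) * jb p.2 ^ k)) := by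
      rw [gF1]; ring
    rw [this, abs_mul, abs_mul, abs_of_pos hh]
    refine mul_le_mul_of_nonneg_left ?_ hh.le
    calc _ ≤ K * (3 * 1 * Y) := mul_le_mul (hχ.b _) b1 (abs_nonneg _) hK
      _ = _ := by ring
  have e2 : |gF2 χ χ' h N k p| ≤ (3 * K + k) * Y := by
    rw [gF2, abs_mul]
    have e3 : |χ (1 / N * p.2) * (k * Y * (p.2 / jb p.2))| ≤ k * Y := by
      rw [abs_mul, abs_mul]
      have : |p.2 / jb p.2| ≤ 1 := by
        rw [abs_div, abs_of_pos j0, div_le_one j0]; exact jb_abs _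
      have h6 : |(k : ℝ) * Y| = k * Y := abs_of_nonneg (by positivity)
      rw [h6]
      have h7 : (k * Y) * |p.2 / jb p.2| ≤ k * Y * 1 :=
        mul_le_mul_of_nonneg_left this (by positivity)
      have := mul_le_mul (absχ (1 / N * p.2)) h7 (by positivity) zero_le_one
      linarith
    have e4 := (abs_add_le (χ' (1 / N * p.2) * (1 / N) * jb p.2 ^ k)
      (χ (1 / N * p.2) * (k * Y * (p.2 / jb p.2)))).trans (add_le_add b2 e3)
    have := mul_le_mul (absχ (h / N * p.1)) e4 (abs_nonneg _) zero_le_one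
    linarith
  have q1 := pow_le_pow_left₀ (abs_nonneg _) e1 2
  have q2 := pow_le_pow_left₀ (abs_nonneg _) e2 2
  rw [sq_abs] at q1 q2
  have hYY : Y ^ 2 = (1 + p.2 ^ 2) ^ (k - 1) := by
    rw [hY, ← jb_sq, ← pow_mul, ← pow_mul, mul_comm]
  rw [← hYY]
  have q3 := mul_le_mul_of_nonneg_left q2 (by positivity : 0 ≤ h ^ 2)
  calc _ ≤ (h * (3 * K * Y)) ^ 2 + h ^ 2 * ((3 * K + k) * Y) ^ 2 := add_le_add q1 q3
    _ = _ := by ring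

lemma gF_sq (h N : ℝ) (k : ℕ) (p : ℝ × ℝ) :
    gF χ h N k p ^ 2 = (χ (h / N * p.1) * χ (1 / N * p.2)) ^ 2 * (1 + p.2 ^ 2) ^ k := by
  rw [gF, ← jb_sq, ← pow_mul, mul_comm 2 k, pow_mul]; ring

lemma chi2_le (hχ : Chi χ χ' K) (a b : ℝ) : (χ a * χ b) ^ 2 ≤ 1 := by
  have h1 := mul_le_mul (hχ.le1 a) (hχ.le1 b) (hχ.nn b) zero_le_one
  have h0 := mul_nonneg (hχ.nn a) (hχ.nn b)
  nlinarith

lemma gF_sq_le (hχ : Chi χ χ' K) (h N : ℝ) (k : ℕ) (p : ℝ × ℝ) :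
    gF χ h N k p ^ 2 ≤ (1 + p.2 ^ 2) ^ k := by
  rw [gF_sq]
  have := mul_le_mul_of_nonneg_right (chi2_le hχ (h / N * p.1) (1 / N * p.2))
    (by positivity : 0 ≤ (1 + p.2 ^ 2) ^ k)
  linarith

lemma fatou_cut (hχ : Chi χ χ' K) {h X : ℝ} (hh : 0 < h) {f : ℝ × ℝ → ℝ} (cf : Continuous f)
    (hf : ∀ p, 0 ≤ f p)
    (hi : ∀ N : ℝ, 1 ≤ N → IntegrableOn (fun p => (χ (h / N * p.1) * χ (1 / N * p.2)) ^ 2 * f p)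
      halfPlane ∧ ∫ p in halfPlane, (χ (h / N * p.1) * χ (1 / N * p.2)) ^ 2 * f p ≤ X) :
    ∫⁻ p in halfPlane, ENNReal.ofReal (f p) ≤ ENNReal.ofReal X := by
  have cχ : Continuous χ := continuous_iff_continuousAt.2 fun x => (hχ.d x).continuousAt
  let F : ℕ → ℝ × ℝ → ENNReal := fun N p =>
    ENNReal.ofReal ((χ (h / (N + 1) * p.1) * χ (1 / (N + 1) * p.2)) ^ 2 * f p)
  have hF : ∀ N, Measurable (F N) := fun N => by
    have : Continuous fun p : ℝ × ℝ => (χ (h / ((N:ℝ) + 1) * p.1) * χ (1 / ((N:ℝ) + 1) * p.2)) ^ 2 * f p := by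
      fun_prop
    exact this.measurable.ennreal_ofReal
  have hlim : ∀ p, liminf (fun N => F N p) atTop = ENNReal.ofReal (f p) := by
    intro p
    apply Tendsto.liminf_eq
    apply tendsto_const_nhds.congr'
    obtain ⟨n, hn⟩ := exists_nat_ge (h * |p.1| + |p.2|)
    filter_upwards [eventually_ge_atTop n] with N hN
    have hN' : (n : ℝ) ≤ N := by exact_mod_cast hN
    have hN0 : (0:ℝ) < N + 1 := by positivity
    have t0 : 0 ≤ h * |p.1| := by positivity
    have t1 : χ (h / (N + 1) * p.1) = 1 := by
      apply hχ.one
      rw [abs_mul, abs_of_pos (by positivity), div_mul_eq_mul_div, div_le_one hN0]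
      linarith [abs_nonneg p.2]
    have t2 : χ (1 / (N + 1) * p.2) = 1 := by
      apply hχ.one
      rw [abs_mul, abs_of_pos (by positivity), div_mul_eq_mul_div, div_le_one hN0]
      linarith
    simp only [F, t1, t2]; simp
  calc ∫⁻ p in halfPlane, ENNReal.ofReal (f p)
      = ∫⁻ p in halfPlane, liminf (fun N => F N p) atTop := by simp only [hlim]
    _ ≤ liminf (fun N => ∫⁻ p in halfPlane, F N p) atTop := lintegral_liminf_le hF
    _ ≤ liminf (fun _ : ℕ => ENNReal.ofReal X) atTop := by
        refine liminf_le_liminf (Eventually.of_forall fun N => ?_)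
        obtain ⟨i, hX⟩ := hi (N + 1) (by linarith [(Nat.cast_nonneg N : (0:ℝ) ≤ N)])
        have hnn : ∀ p : ℝ × ℝ, 0 ≤ (χ (h / ((N:ℝ) + 1) * p.1) * χ (1 / ((N:ℝ) + 1) * p.2)) ^ 2 * f p :=
          fun p => mul_nonneg (sq_nonneg _) (hf p)
        rw [← ofReal_integral_eq_lintegral_ofReal i (Eventually.of_forall hnn)]
        exact ENNReal.ofReal_le_ofReal hX
    _ = ENNReal.ofReal X := by simp

lemma int_of_lint {f : ℝ × ℝ → ℝ} (cf : Continuous f) (hf : ∀ p, 0 ≤ f p) {X : ℝ} (hX : 0 ≤ X)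
    (h : ∫⁻ p in halfPlane, ENNReal.ofReal (f p) ≤ ENNReal.ofReal X) :
    IntegrableOn f halfPlane ∧ ∫ p in halfPlane, f p ≤ X := by
  have i : IntegrableOn f halfPlane := by
    refine ⟨cf.aestronglyMeasurable, ?_⟩
    rw [hasFiniteIntegral_iff_ofReal (Eventually.of_forall hf)]
    exact h.trans_lt ENNReal.ofReal_lt_top
  refine ⟨i, ?_⟩
  rw [← ofReal_integral_eq_lintegral_ofReal i (Eventually.of_forall hf)] at h
  exact (ENNReal.ofReal_le_ofReal_iff hX).1 h
end cutoff


def Cst (K ω R : ℝ) : ℕ → ℝ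
  | 0 => 1
  | n + 1 => ((3 * K) ^ 2 + (3 * K + ((n + 1 : ℕ) : ℝ)) ^ 2) * Cst K ω R n + (ω + 1) * (1 + R ^ 2) ^ (n + 1)

lemma Cst_pos {K ω R : ℝ} (hω : 0 < ω) (n : ℕ) : 0 < Cst K ω R n := by
  induction n with
  | zero => simp [Cst]
  | succ n ih => rw [Cst]; positivity

lemma nsq_mul (a : ℝ) (z : ℂ) : ‖(a : ℂ) * z‖ ^ 2 = a ^ 2 * ‖z‖ ^ 2 := by
  rw [norm_mul, mul_pow, Complex.norm_real, Real.norm_eq_abs, sq_abs]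

section moments
variable {χ χ' : ℝ → ℝ} {K : ℝ} {ψ ψ1 ψ2 ψ11 ψ22 : ℝ × ℝ → ℂ} {σ : ℝ → ℝ} {h l y c ω R : ℝ}

lemma D_bound (hχ : Chi χ χ' K) (he : Eig (h ^ 2) l σ ψ ψ1 ψ2 ψ11 ψ22) (hh : 0 < h) {N : ℝ}
    (hN : 1 ≤ N) (n : ℕ)
    (i : IntegrableOn (fun p => (1 + p.2 ^ 2) ^ (n - 1) * ‖ψ p‖ ^ 2) halfPlane) :
    ∫ p in halfPlane, (gF1 χ χ' h N n p ^ 2 + h ^ 2 * gF2 χ χ' h N n p ^ 2) * ‖ψ p‖ ^ 2 ≤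
      h ^ 2 * ((3 * K) ^ 2 + (3 * K + (n : ℝ)) ^ 2) *
        ∫ p in halfPlane, (1 + p.2 ^ 2) ^ (n - 1) * ‖ψ p‖ ^ 2 := by
  rw [← integral_const_mul]
  refine setIntegral_mono (D_int (gF_cut hχ hh hN n) he.cψ _) (i.const_mul _) fun p => ?_
  have := mul_le_mul_of_nonneg_right (gF_D hχ hh hN n p) (by positivity : 0 ≤ ‖ψ p‖ ^ 2)
  simp only
  linarith

lemma moments (hχ : Chi χ χ' K) (he : Eig (h ^ 2) l σ ψ ψ1 ψ2 ψ11 ψ22) (hh : 0 < h)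
    (hω : 0 < ω) (hc0 : 0 < c)
    (hl : l ≤ y ^ 2 + ω * h ^ 2)
    (hP : ∀ σ : ℝ, ∃ P P' : ℝ → ℝ, (∀ x, HasDerivAt P (P' x) x) ∧ Continuous P' ∧ 0 ≤ P σ ∧
      ∀ x, y ^ 2 + c * min 1 ((σ + y) ^ 2) ≤ P' x + x ^ 2 - P x ^ 2)
    (hU : (∃ W W' : ℝ → ℝ, (∀ x, HasDerivAt W (W' x) x) ∧ Continuous W' ∧
        ∀ x, W x ^ 2 ≤ c * min 1 ((σ x + y) ^ 2) / h ^ 2 ∧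
          2 * (ω + 1) ≤ c * min 1 ((σ x + y) ^ 2) / h ^ 2 + W' x) ∨
      ∀ x, R ≤ |x| → ω + 1 ≤ c * min 1 ((σ x + y) ^ 2) / h ^ 2)
    (iψ : IntegrableOn (fun p => ‖ψ p‖ ^ 2) halfPlane) (n : ℕ) :
    IntegrableOn (fun p => (1 + p.2 ^ 2) ^ n * ‖ψ p‖ ^ 2) halfPlane ∧
    ∫ p in halfPlane, (1 + p.2 ^ 2) ^ n * ‖ψ p‖ ^ 2 ≤
      Cst K ω R n * ∫ p in halfPlane, ‖ψ p‖ ^ 2 := by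
  have hI0 : 0 ≤ ∫ p in halfPlane, ‖ψ p‖ ^ 2 := integral_nonneg fun p => by positivity
  have cψ := he.cψ
  induction n with
  | zero => simpa [Cst] using iψ
  | succ n ih =>
    obtain ⟨i, hi⟩ := ih
    have cf : Continuous fun p : ℝ × ℝ => (1 + p.2 ^ 2) ^ (n + 1) * ‖ψ p‖ ^ 2 := by fun_prop
    have hf : ∀ p : ℝ × ℝ, 0 ≤ (1 + p.2 ^ 2) ^ (n + 1) * ‖ψ p‖ ^ 2 := fun p => by positivity
    refine int_of_lint cf hf (mul_nonneg (Cst_pos hω _).le hI0) ?_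
    refine fatou_cut hχ hh cf hf fun N hN => ?_
    have hc := gF_cut hχ hh hN (n + 1)
    have e : ∀ p, (χ (h / N * p.1) * χ (1 / N * p.2)) ^ 2 * ((1 + p.2 ^ 2) ^ (n + 1) * ‖ψ p‖ ^ 2)
        = ‖(gF χ h N (n + 1) p : ℂ) * ψ p‖ ^ 2 := by
      intro p
      rw [nsq_mul, gF_sq]; ring
    simp only [e]
    obtain ⟨c0, c1, c2, s0, s1, s2⟩ := cut_phi hc he
    refine ⟨n_int c0 s0, ?_⟩
    have hgR : ∀ p : ℝ × ℝ, |p.2| < R → gF χ h N (n + 1) p ^ 2 ≤ (1 + R ^ 2) ^ (n + 1) := by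
      intro p hp
      refine (gF_sq_le hχ h N (n + 1) p).trans ?_
      have h2 : p.2 ^ 2 ≤ R ^ 2 := by
        rw [← sq_abs p.2]; exact pow_le_pow_left₀ (abs_nonneg _) hp.le 2
      exact pow_le_pow_left₀ (by positivity) (by linarith) _
    have k1 := key hc he (by positivity : 0 < h ^ 2) hω hc0 hl hP hU
      (by positivity : 0 ≤ (1 + R ^ 2) ^ (n + 1)) hgR iψ
    have k2 := D_bound hχ he hh hN (n + 1) i
    simp only [Nat.add_sub_cancel] at k2
    refine k1.trans ?_
    have hh2 : 0 < h ^ 2 := by positivity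
    have k3 := mul_le_mul_of_nonneg_left k2 (inv_pos.2 hh2).le
    have k4 : (h ^ 2)⁻¹ * (h ^ 2 * ((3 * K) ^ 2 + (3 * K + ((n + 1 : ℕ) : ℝ)) ^ 2) *
        ∫ p in halfPlane, (1 + p.2 ^ 2) ^ n * ‖ψ p‖ ^ 2) =
        ((3 * K) ^ 2 + (3 * K + ((n + 1 : ℕ) : ℝ)) ^ 2) *
        ∫ p in halfPlane, (1 + p.2 ^ 2) ^ n * ‖ψ p‖ ^ 2 := by
      field_simp
    have k5 := mul_le_mul_of_nonneg_left hi
      (by positivity : 0 ≤ (3 * K) ^ 2 + (3 * K + ((n + 1 : ℕ) : ℝ)) ^ 2)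
    rw [k4] at k3
    rw [Cst]
    linarith

lemma add_sq_c (a b : ℂ) : ‖b‖ ^ 2 ≤ 2 * ‖a + b‖ ^ 2 + 2 * ‖a‖ ^ 2 := by
  have h : ‖b‖ ≤ ‖a + b‖ + ‖a‖ := by
    have := norm_sub_le (a + b) a
    simpa using this
  nlinarith [norm_nonneg b, sq_nonneg (‖a + b‖ - ‖a‖)]

lemma deriv_moments (hχ : Chi χ χ' K) (he : Eig (h ^ 2) l σ ψ ψ1 ψ2 ψ11 ψ22) (hh : 0 < h)
    (hh1 : h ≤ 1) (hω : 0 < ω) (hl : l ≤ 1 + ω) (n : ℕ) {Q : ℝ}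
    (i : IntegrableOn (fun p => (1 + p.2 ^ 2) ^ n * ‖ψ p‖ ^ 2) halfPlane)
    (hQ : ∫ p in halfPlane, (1 + p.2 ^ 2) ^ n * ‖ψ p‖ ^ 2 ≤ Q)
    (i' : IntegrableOn (fun p => (1 + p.2 ^ 2) ^ (n - 1) * ‖ψ p‖ ^ 2) halfPlane) :
    ∫⁻ p in halfPlane, ENNReal.ofReal ((1 + p.2 ^ 2) ^ n * (‖ψ1 p‖ ^ 2 + h ^ 2 * ‖ψ2 p‖ ^ 2)) ≤
      ENNReal.ofReal ((2 * (1 + ω) + 4 * ((3 * K) ^ 2 + (3 * K + (n : ℝ)) ^ 2)) * Q) := by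
  have cψ := he.cψ
  have cψ1 := he.cψ1
  have cψ2 := he.cψ2
  have cf : Continuous fun p : ℝ × ℝ => (1 + p.2 ^ 2) ^ n * (‖ψ1 p‖ ^ 2 + h ^ 2 * ‖ψ2 p‖ ^ 2) := by fun_prop
  have hf : ∀ p : ℝ × ℝ, 0 ≤ (1 + p.2 ^ 2) ^ n * (‖ψ1 p‖ ^ 2 + h ^ 2 * ‖ψ2 p‖ ^ 2) := fun p => by positivity
  refine fatou_cut hχ hh cf hf fun N hN => ?_
  have hc := gF_cut hχ hh hN n
  obtain ⟨c0, c1, c2, s0, s1, s2⟩ := cut_phi hc he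
  have i0 := n_int c0 s0
  have i1 := n_int c1 s1
  have i2 := n_int c2 s2
  have iD := D_int hc cψ (h ^ 2)
  set g := gF χ h N n with hg
  set g1 := gF1 χ χ' h N n with hg1
  set g2 := gF2 χ χ' h N n with hg2
  have e : ∀ p, (χ (h / N * p.1) * χ (1 / N * p.2)) ^ 2 * ((1 + p.2 ^ 2) ^ n * (‖ψ1 p‖ ^ 2 + h ^ 2 * ‖ψ2 p‖ ^ 2))
        = g p ^ 2 * (‖ψ1 p‖ ^ 2 + h ^ 2 * ‖ψ2 p‖ ^ 2) := by
    intro p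
    rw [hg, gF_sq]; ring
  simp only [e]
  have iT : IntegrableOn (fun p => g p ^ 2 * (‖ψ1 p‖ ^ 2 + h ^ 2 * ‖ψ2 p‖ ^ 2)) halfPlane := by
    have cg := hc.cg
    have s : HasCompactSupport (fun p => g p ^ 2) := hc.hg.comp_left (g := fun z : ℝ => z ^ 2) (by simp)
    have s' : HasCompactSupport (fun p => g p ^ 2 * (‖ψ1 p‖ ^ 2 + h ^ 2 * ‖ψ2 p‖ ^ 2)) := s.mul_right
    have c' : Continuous (fun p => g p ^ 2 * (‖ψ1 p‖ ^ 2 + h ^ 2 * ‖ψ2 p‖ ^ 2)) := by fun_prop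
    exact (c'.integrable_of_hasCompactSupport (μ := volume) s').integrableOn
  refine ⟨iT, ?_⟩
  have h1 := C2 hc he
  have h2 := D_bound hχ he hh hN n i'
  rw [← hg1, ← hg2] at h2
  have j12 : IntegrableOn (fun p => 2 * ‖(g1 p : ℂ) * ψ p + g p * ψ1 p‖ ^ 2 +
      2 * h ^ 2 * ‖(g2 p : ℂ) * ψ p + g p * ψ2 p‖ ^ 2) halfPlane := (i1.const_mul 2).add (i2.const_mul (2 * h ^ 2))
  have h3 : ∫ p in halfPlane, g p ^ 2 * (‖ψ1 p‖ ^ 2 + h ^ 2 * ‖ψ2 p‖ ^ 2) ≤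
      ∫ p in halfPlane, ((2 * ‖(g1 p : ℂ) * ψ p + g p * ψ1 p‖ ^ 2 +
      2 * h ^ 2 * ‖(g2 p : ℂ) * ψ p + g p * ψ2 p‖ ^ 2)
        + 2 * ((g1 p ^ 2 + h ^ 2 * g2 p ^ 2) * ‖ψ p‖ ^ 2)) := by
    refine setIntegral_mono iT (j12.add (iD.const_mul 2)) fun p => ?_
    have a1 := add_sq_c ((g1 p : ℂ) * ψ p) (g p * ψ1 p)
    have a2 := add_sq_c ((g2 p : ℂ) * ψ p) (g p * ψ2 p)
    rw [nsq_mul, nsq_mul] at a1 a2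
    have a3 := mul_le_mul_of_nonneg_left a2 (by positivity : 0 ≤ h ^ 2)
    simp only
    linarith
  rw [integral_add j12 (iD.const_mul 2), integral_add (i1.const_mul 2) (i2.const_mul (2 * h ^ 2)),
    integral_const_mul, integral_const_mul, integral_const_mul] at h3
  have h4 : ∫ p in halfPlane, ‖(g p : ℂ) * ψ p‖ ^ 2 ≤ ∫ p in halfPlane, (1 + p.2 ^ 2) ^ n * ‖ψ p‖ ^ 2 := by
    refine setIntegral_mono i0 i fun p => ?_
    simp only [nsq_mul]
    exact mul_le_mul_of_nonneg_right (gF_sq_le hχ h N n p) (by positivity)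
  have h5 : ∫ p in halfPlane, (1 + p.2 ^ 2) ^ (n - 1) * ‖ψ p‖ ^ 2 ≤
      ∫ p in halfPlane, (1 + p.2 ^ 2) ^ n * ‖ψ p‖ ^ 2 := by
    refine setIntegral_mono i' i fun p => ?_
    refine mul_le_mul_of_nonneg_right ?_ (by positivity)
    exact pow_le_pow_right₀ (by nlinarith [sq_nonneg p.2]) (by omega)
  have h50 : 0 ≤ ∫ p in halfPlane, (1 + p.2 ^ 2) ^ (n - 1) * ‖ψ p‖ ^ 2 :=
    integral_nonneg fun p => by positivity
  have h40 : 0 ≤ ∫ p in halfPlane, ‖(g p : ℂ) * ψ p‖ ^ 2 :=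
    integral_nonneg fun p => by positivity
  have hD0 : 0 ≤ (3 * K) ^ 2 + (3 * K + (n : ℝ)) ^ 2 := by positivity
  have hsq : h ^ 2 ≤ 1 := by nlinarith
  clear_value g g1 g2
  generalize (∫ p in halfPlane, ‖(g p : ℂ) * ψ p‖ ^ 2) = I0 at *
  generalize (∫ p in halfPlane, (1 + p.2 ^ 2) ^ n * ‖ψ p‖ ^ 2) = In at *
  generalize (∫ p in halfPlane, (1 + p.2 ^ 2) ^ (n - 1) * ‖ψ p‖ ^ 2) = In' at *
  generalize (∫ p in halfPlane, ‖(g2 p : ℂ) * ψ p + g p * ψ2 p‖ ^ 2) = I2 at *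
  generalize (∫ p in halfPlane, ‖(g1 p : ℂ) * ψ p + g p * ψ1 p‖ ^ 2) = I1 at *
  generalize (∫ p in halfPlane, (g1 p ^ 2 + h ^ 2 * g2 p ^ 2) * ‖ψ p‖ ^ 2) = ID at *
  generalize (∫ p in halfPlane, g p ^ 2 * (‖ψ1 p‖ ^ 2 + h ^ 2 * ‖ψ2 p‖ ^ 2)) = IT at *
  generalize (3 * K) ^ 2 + (3 * K + (n : ℝ)) ^ 2 = D at *
  have q1 : l * I0 ≤ (1 + ω) * Q :=
    (mul_le_mul_of_nonneg_right hl h40).trans (mul_le_mul_of_nonneg_left (h4.trans hQ) (by positivity))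
  have q2 : ID ≤ D * Q := by
    refine h2.trans ?_
    have : h ^ 2 * D ≤ D := by nlinarith
    calc h ^ 2 * D * In' ≤ D * In' := mul_le_mul_of_nonneg_right this h50
      _ ≤ D * Q := mul_le_mul_of_nonneg_left (h5.trans hQ) hD0
  linarith

end moments

lemma eig_of (B : ℝ) (m : ℤ) (lam : ℝ) (ψ : ℝ × ℝ → ℂ) (hψ : IsQEigenfunction B m lam ψ) :
    Eig (B ^ (-(1:ℝ)/3)) lam
      (fun r => ((m : ℝ) - B / 2) / Real.sqrt B + B ^ (-(1:ℝ)/6) * r ^ 2 / 2) ψ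
      (fun p => fderiv ℝ ψ p ((1:ℝ), (0:ℝ))) (fun p => fderiv ℝ ψ p ((0:ℝ), (1:ℝ)))
      (d2τ ψ) (d2ρ ψ) := by
  obtain ⟨cd, -, -, -, -, pde, bc⟩ := hψ
  have sm : ∀ f : ℝ × ℝ → ℂ, ContDiff ℝ (⊤ : ℕ∞) f → ∀ v : ℝ × ℝ,
      ContDiff ℝ (⊤ : ℕ∞) (fun p => fderiv ℝ f p v) := fun f hf v =>
    (hf.fderiv_right (m := (⊤ : ℕ∞)) (by simp)).clm_apply contDiff_const
  have s1 : ∀ f : ℝ × ℝ → ℂ, ContDiff ℝ (⊤ : ℕ∞) f → ∀ t r : ℝ,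
      HasDerivAt (fun s => f (s, r)) (fderiv ℝ f (t, r) ((1:ℝ), (0:ℝ))) t := by
    intro f hf t r
    have h1 : HasDerivAt (fun s : ℝ => (s, r)) ((1:ℝ), (0:ℝ)) t :=
      (hasDerivAt_id t).prodMk (hasDerivAt_const t r)
    exact ((hf.differentiable (by simp)) (t, r)).hasFDerivAt.comp_hasDerivAt t h1
  have s2 : ∀ f : ℝ × ℝ → ℂ, ContDiff ℝ (⊤ : ℕ∞) f → ∀ t r : ℝ,
      HasDerivAt (fun s => f (t, s)) (fderiv ℝ f (t, r) ((0:ℝ), (1:ℝ))) r := by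
    intro f hf t r
    have h1 : HasDerivAt (fun s : ℝ => (t, s)) ((0:ℝ), (1:ℝ)) r :=
      (hasDerivAt_const r t).prodMk (hasDerivAt_id r)
    exact ((hf.differentiable (by simp)) (t, r)).hasFDerivAt.comp_hasDerivAt r h1
  have k1 := sm ψ cd (1, 0)
  have k2 := sm ψ cd (0, 1)
  refine ⟨by fun_prop, cd.continuous, k1.continuous, k2.continuous, (sm _ k1 (1, 0)).continuous,
    (sm _ k2 (0, 1)).continuous, s1 ψ cd, s2 ψ cd, s1 _ k1, s2 _ k2, ?_, bc⟩
  intro p hp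
  have := pde p hp
  rw [qPot] at this
  rw [← add_assoc]
  exact this

/-- Corollary 3.2: polynomial moment bounds in `ρ` for low-energy
eigenfunctions of `Q_m(B)`. -/
theorem statement9 (ω : ℝ) (hω : 0 < ω) (n : ℕ) :
    ∃ B₀ C₀ : ℝ, 0 < B₀ ∧ 0 < C₀ ∧
      ∀ B : ℝ, B₀ < B → ∀ (m : ℤ) (lam : ℝ) (ψ : ℝ × ℝ → ℂ),
        IsQEigenfunction B m lam ψ →
        lam ≤ Theta0 + ω * B ^ (-(1:ℝ)/3) →
        (∫⁻ p in halfPlane, ENNReal.ofReal (|p.2| ^ n *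
            (‖ψ p‖ ^ 2 + ‖fderiv ℝ ψ p ((1:ℝ), (0:ℝ))‖ ^ 2
              + B ^ (-(1:ℝ)/3) * ‖fderiv ℝ ψ p ((0:ℝ), (1:ℝ))‖ ^ 2)))
          ≤ ENNReal.ofReal (C₀ * ∫ p in halfPlane, ‖ψ p‖ ^ 2) := by
  obtain ⟨y, c, v, v1, hy0, hy1, hc0, hc1, vpos, dv, dv1, hv0, hC, hP⟩ := pc_P
  have hT : Theta0 ≤ y ^ 2 := theta0_le vpos dv dv1 hv0 hC
  obtain ⟨R, H, hH0, hH1, hcases⟩ := scalar_cases hc0 hc1 hω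
  obtain ⟨χ, χ', K, hχ⟩ := chi_exists
  have htend := tendsto_rpow_neg_atTop (by norm_num : (0:ℝ) < 1 / 6)
  obtain ⟨a, ha⟩ := eventually_atTop.1 (htend.eventually (gt_mem_nhds hH0))
  set D := (2 * (1 + ω) + 4 * ((3 * K) ^ 2 + (3 * K + (n : ℝ)) ^ 2)) with hD
  have hDp : 0 < D := by positivity
  have hCp : 0 < Cst K ω R n := Cst_pos hω n
  refine ⟨max a 1, (1 + D) * Cst K ω R n, by positivity, by positivity, ?_⟩
  intro B hB m lam ψ hψ hlam
  have hBa : a < B := lt_of_le_of_lt (le_max_left _ _) hB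
  have hB1 : 1 < B := lt_of_le_of_lt (le_max_right _ _) hB
  have hB0 : 0 < B := by linarith
  set h := B ^ (-(1:ℝ)/6) with hhdef
  have hh : 0 < h := Real.rpow_pos_of_pos hB0 _
  have hhH : h < H := by
    have := ha B hBa.le
    rw [hhdef, neg_div]; exact this
  have hk : B ^ (-(1:ℝ)/3) = h ^ 2 := by
    rw [hhdef, ← Real.rpow_natCast, ← Real.rpow_mul hB0.le]; norm_num
  have he := eig_of B m lam ψ hψ
  obtain ⟨cd, iψ, -, -, hpos, -, -⟩ := hψ
  rw [hk] at he hlam ⊢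
  rw [← hhdef] at he
  set ξ := ((m : ℝ) - B / 2) / Real.sqrt B with hξ
  have hl : lam ≤ y ^ 2 + ω * h ^ 2 := by linarith
  have hh1 : h ≤ 1 := by linarith
  have hl1 : lam ≤ 1 + ω := by
    have : h ^ 2 ≤ 1 := by nlinarith
    nlinarith
  have hσ : ∀ x : ℝ, ξ + h * x ^ 2 / 2 + y = h * ((ξ + y) / h + x ^ 2 / 2) := by
    intro x; field_simp; ring
  have hU := hcases h hh hhH ((ξ + y) / h)
  simp only [← hσ] at hU
  have mom := fun j => moments hχ he hh hω hc0 hl hP hU iψ j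
  obtain ⟨i, hi⟩ := mom n
  have hder := deriv_moments hχ he hh hh1 hω hl1 n i hi (mom (n - 1)).1
  set I := ∫ p in halfPlane, ‖ψ p‖ ^ 2 with hI
  rw [← hD] at hder
  have hm : ∫⁻ p in halfPlane, ENNReal.ofReal ((1 + p.2 ^ 2) ^ n * ‖ψ p‖ ^ 2)
      ≤ ENNReal.ofReal (Cst K ω R n * I) := by
    rw [← ofReal_integral_eq_lintegral_ofReal i (Eventually.of_forall fun p => by positivity)]
    exact ENNReal.ofReal_le_ofReal hi
  have cψ := he.cψ
  have cψ1 := he.cψ1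
  have cψ2 := he.cψ2
  have mea : Measurable fun p : ℝ × ℝ => ENNReal.ofReal ((1 + p.2 ^ 2) ^ n * ‖ψ p‖ ^ 2) := by
    have : Continuous fun p : ℝ × ℝ => (1 + p.2 ^ 2) ^ n * ‖ψ p‖ ^ 2 := by fun_prop
    exact this.measurable.ennreal_ofReal
  calc _ ≤ ∫⁻ p in halfPlane, (ENNReal.ofReal ((1 + p.2 ^ 2) ^ n * ‖ψ p‖ ^ 2) +
        ENNReal.ofReal ((1 + p.2 ^ 2) ^ n * (‖fderiv ℝ ψ p ((1:ℝ), (0:ℝ))‖ ^ 2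
          + h ^ 2 * ‖fderiv ℝ ψ p ((0:ℝ), (1:ℝ))‖ ^ 2))) := by
        refine lintegral_mono fun p => ?_
        rw [← ENNReal.ofReal_add (by positivity) (by positivity)]
        apply ENNReal.ofReal_le_ofReal
        have h1 : |p.2| ^ n ≤ (1 + p.2 ^ 2) ^ n := by
          apply pow_le_pow_left₀ (abs_nonneg _)
          nlinarith [sq_abs p.2, sq_nonneg (|p.2| - 1), abs_nonneg p.2]
        have h2 : 0 ≤ ‖ψ p‖ ^ 2 + ‖fderiv ℝ ψ p ((1:ℝ), (0:ℝ))‖ ^ 2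
              + h ^ 2 * ‖fderiv ℝ ψ p ((0:ℝ), (1:ℝ))‖ ^ 2 := by positivity
        have := mul_le_mul_of_nonneg_right h1 h2
        linarith
    _ = (∫⁻ p in halfPlane, ENNReal.ofReal ((1 + p.2 ^ 2) ^ n * ‖ψ p‖ ^ 2)) +
        ∫⁻ p in halfPlane, ENNReal.ofReal ((1 + p.2 ^ 2) ^ n * (‖fderiv ℝ ψ p ((1:ℝ), (0:ℝ))‖ ^ 2
          + h ^ 2 * ‖fderiv ℝ ψ p ((0:ℝ), (1:ℝ))‖ ^ 2)) := lintegral_add_left mea _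
    _ ≤ ENNReal.ofReal (Cst K ω R n * I) + ENNReal.ofReal (D * (Cst K ω R n * I)) :=
        add_le_add hm hder
    _ = ENNReal.ofReal ((1 + D) * Cst K ω R n * I) := by
        rw [← ENNReal.ofReal_add (by positivity) (by positivity)]
        congr 1; ring
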